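/- Let F₀ be a field of characteristic 0 that is finitely generated over ℚ. There is a finite subset 𝒮 of ℕ × ℕ, depending only on F₀, such that for every integer n of the form n = 3^{k₁} + 3^{k₂} + 3^{k₃} with integers k₁ > k₂ > k₃ ≥ 0 and (k₁ − k₃, k₂ − k₃) ∉ 𝒮, the general field extension Eₙ/Fₙ of degree n over F₀ contains no nonzero element δ ∈ Eₙ with Tr_{Eₙ/Fₙ}(δ) = 0 and Tr_{Eₙ/Fₙ}(δ³) = 0. -/

import Mathlib

noncomputable section

namespace GenExtBase

variable (F₀ : Type) [Field F₀]

/-- `Lₙ = F₀(x₁, …, xₙ)`, the field of rational functions in `n` variables over `F₀`. -/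
def L (n : ℕ) : Type := FractionRing (MvPolynomial (Fin n) F₀)

noncomputable instance (n : ℕ) : Field (L F₀ n) :=
  inferInstanceAs (Field (FractionRing (MvPolynomial (Fin n) F₀)))

noncomputable instance (n : ℕ) : Algebra (MvPolynomial (Fin n) F₀) (L F₀ n) :=
  inferInstanceAs (Algebra (MvPolynomial (Fin n) F₀) (FractionRing (MvPolynomial (Fin n) F₀)))

instance (n : ℕ) : IsFractionRing (MvPolynomial (Fin n) F₀) (L F₀ n) :=
  inferInstanceAs
    (IsFractionRing (MvPolynomial (Fin n) F₀) (FractionRing (MvPolynomial (Fin n) F₀)))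

/-- The automorphism of `Lₙ` induced by a permutation `σ ∈ Sₙ` of the variables
`x₁, …, xₙ`. -/
noncomputable def permAut (n : ℕ) (σ : Equiv.Perm (Fin n)) : L F₀ n ≃+* L F₀ n :=
  IsFractionRing.ringEquivOfRingEquiv (MvPolynomial.renameEquiv F₀ σ).toRingEquiv

/-- The subfield of `Lₙ` consisting of elements fixed by all permutations in `S`. -/
noncomputable def fixedSubfield (n : ℕ) (S : Set (Equiv.Perm (Fin n))) :
    Subfield (L F₀ n) where
  carrier := {a | ∀ σ ∈ S, permAut F₀ n σ a = a}
  mul_mem' := fun ha hb σ hσ => by rw [map_mul, ha σ hσ, hb σ hσ]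
  one_mem' := fun σ _ => map_one _
  add_mem' := fun ha hb σ hσ => by rw [map_add, ha σ hσ, hb σ hσ]
  zero_mem' := fun σ _ => map_zero _
  neg_mem' := fun ha σ hσ => by rw [map_neg, ha σ hσ]
  inv_mem' := fun a ha σ hσ => by rw [map_inv₀, ha σ hσ]

/-- `Fₙ = Lₙ^{Sₙ}`, the fixed field of the full symmetric group. -/
noncomputable def F (n : ℕ) : Subfield (L F₀ n) := fixedSubfield F₀ n Set.univ

/-- `Eₙ = Lₙ^{Sₙ₋₁}`, the fixed field of the subgroup of permutations fixing `x₁`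
(i.e. permuting only `x₂, …, xₙ`). -/
noncomputable def E (n : ℕ) : Subfield (L F₀ n) :=
  fixedSubfield F₀ n {σ | ∀ i : Fin n, (i : ℕ) = 0 → σ i = i}

theorem F_le_E (n : ℕ) : F F₀ n ≤ E F₀ n := fun _ ha σ _ => ha σ (Set.mem_univ σ)

/-- `Eₙ` is an `Fₙ`-algebra via the inclusion `Fₙ ⊆ Eₙ`. -/
noncomputable instance (n : ℕ) : Algebra (F F₀ n) (E F₀ n) :=
  (Subfield.inclusion (F_le_E F₀ n)).toAlgebra

end GenExtBase

/-!
After a symmetric denominator is cleared, the conjugates of `δ` form an `Sₙ`-equivariant family of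
polynomials. Identify the `n = 3^k₁ + 3^k₂ + 3^k₃` variables with the disjoint union of the groups
`(ℤ/3)^kᵢ`, adjoin a primitive cube root of unity, and diagonalize the translations of these groups
by a Fourier change of variables. The leading coefficients then give a nonzero vector `(a, b, c)`
over `F₀(ζ₃)` with `3^k₁ a + 3^k₂ b + 3^k₃ c = 0 = 3^k₁ a³ + 3^k₂ b³ + 3^k₃ c³`.

The ratio `a / b` is a root of a cubic over `ℚ`, hence lies in the algebraic closure of `ℚ` in
`F₀(ζ₃)`, which is a number field. If the cubic has a rational root, then descent on
`x³ + y³ = 3ᵏ z³` either rules it out or turns it into an exceptionally good rational approximation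
to the cube root of `9`. Otherwise the discriminant becomes a square in a fixed number field, so its
square class is one of finitely many. This bounds the exponents through solutions of Pell
equations divisible by high powers of `3` and through near misses `d z² - 3^m`. In both cases
near misses are excluded by Thue's gap principle for the Padé approximants of `(1 + w)^(1/b)`.
-/

namespace GenExtBase

section RingChoose

open Finset

variable {K : Type*} [Field K] [CharZero K]

lemma ringChoose_eq_prod_div (r : K) (n : ℕ) :
    Ring.choose r n = (∏ i ∈ range n, (r - i)) / n.factorial := by
  rw [Ring.choose_eq_smul, Polynomial.descPochhammer_smeval_eq_ascPochhammer,
    Polynomial.ascPochhammer_smeval_cast, Polynomial.ascPochhammer_smeval_eq_eval,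
    ← descPochhammer_eval_eq_ascPochhammer, descPochhammer_eval_eq_prod_range, smul_eq_mul,
    inv_mul_eq_div]

lemma succ_mul_ringChoose_succ (r : K) (n : ℕ) :
    (n + 1) * Ring.choose r (n + 1) = r * Ring.choose (r - 1) n := by
  simpa using Ring.choose_smul_choose r (Nat.le_add_left 1 n)

lemma dvd_prod_add_mul_of_isCoprime {b t : ℤ} (hbt : IsCoprime b t) {j : ℕ}
    (ht : t ∣ j.factorial) (r : ℤ) : t ∣ ∏ i ∈ range j, (r + b * i) := by
  obtain ⟨u, v, huv⟩ := hbt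
  have hmod : ∏ i ∈ range j, b * (r * u + i) ≡ ∏ i ∈ range j, (r + b * i) [ZMOD t] := by
    refine Int.ModEq.prod fun i _ => Int.modEq_iff_dvd.mpr ⟨r * v, ?_⟩
    linear_combination -r * huv
  rw [← Int.ModEq.dvd_iff hmod, prod_mul_distrib]
  exact (ht.trans (Nat.factorial_coe_dvd_prod j (r * u))).mul_left _

lemma padicValNat_factorial_le (b j : ℕ) [hb : Fact b.Prime] :
    padicValNat b j.factorial ≤ j := by
  have hlegendre := sub_one_mul_padicValNat_factorial (p := b) j
  have hb2 := hb.out.two_le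
  calc padicValNat b j.factorial ≤ (b - 1) * padicValNat b j.factorial :=
        Nat.le_mul_of_pos_left _ (by omega)
    _ ≤ j := hlegendre ▸ Nat.sub_le _ _

lemma factorial_dvd_pow_mul_prod_sub_mul (b : ℕ) [hb : Fact b.Prime] (r : ℤ) (j : ℕ) :
    (j.factorial : ℤ) ∣ b ^ j * ∏ i ∈ range j, (r - b * i) := by
  obtain ⟨t, ht⟩ := pow_padicValNat_dvd (p := b) (n := j.factorial)
  have hbt : ¬ b ∣ t := by
    rintro ⟨u, rfl⟩
    refine pow_succ_padicValNat_not_dvd (p := b) j.factorial_ne_zero ⟨u, ?_⟩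
    rw [pow_succ, mul_assoc, ← ht]
  have hcop : IsCoprime (-(b : ℤ)) t :=
    (Nat.isCoprime_iff_coprime.mpr (hb.out.coprime_iff_not_dvd.mpr hbt)).neg_left
  have htj : (t : ℤ) ∣ j.factorial := Int.natCast_dvd_natCast.mpr (Dvd.intro_left _ ht.symm)
  have hprod := dvd_prod_add_mul_of_isCoprime hcop htj r
  simp only [neg_mul, ← sub_eq_add_neg] at hprod
  rw [ht, Nat.cast_mul, Nat.cast_pow]
  exact mul_dvd_mul (pow_dvd_pow _ (padicValNat_factorial_le b j)) hprod

lemma pow_mul_ringChoose_mem_bot (b : ℕ) [hb : Fact b.Prime] {x : K}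
    (hx : b * x ∈ (⊥ : Subring K)) (j : ℕ) :
    (b : K) ^ (2 * j) * Ring.choose x j ∈ (⊥ : Subring K) := by
  obtain ⟨r, hr⟩ := Subring.mem_bot.mp hx
  obtain ⟨z, hz⟩ := factorial_dvd_pow_mul_prod_sub_mul b r j
  refine Subring.mem_bot.mpr ⟨z, ?_⟩
  have hscale : (b : K) ^ j * ∏ i ∈ range j, (x - i) = ∏ i ∈ range j, ((r : K) - b * i) := by
    simp_rw [hr, ← mul_sub, prod_mul_distrib, prod_const, card_range]
  have hz' : (b : K) ^ j * ∏ i ∈ range j, ((r : K) - b * i) = j.factorial * z := by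
    exact_mod_cast congrArg (Int.cast : ℤ → K) hz
  have hj : (j.factorial : K) ≠ 0 := Nat.cast_ne_zero.mpr j.factorial_ne_zero
  rw [ringChoose_eq_prod_div, two_mul, pow_add, ← mul_div_assoc, mul_assoc, hscale, hz',
    mul_div_cancel_left₀ _ hj]

lemma abs_ringChoose_le {x : ℝ} {j M : ℕ} (h : ∀ i < j, |x - i| ≤ M) :
    |Ring.choose x j| ≤ 3 ^ M := by
  rw [ringChoose_eq_prod_div, abs_div, abs_prod, Nat.abs_cast]
  calc (∏ i ∈ range j, |x - i|) / j.factorial ≤ (M : ℝ) ^ j / j.factorial := by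
        gcongr
        simpa using prod_le_prod (fun (i : ℕ) _ => abs_nonneg (x - i))
          fun i hi => h i (mem_range.mp hi)
    _ ≤ Real.exp M := Real.pow_div_factorial_le_exp _ M.cast_nonneg _
    _ = Real.exp 1 ^ M := by rw [← Real.exp_nat_mul, mul_one]
    _ ≤ 3 ^ M := by
        gcongr
        exact Real.exp_one_lt_three.le

end RingChoose

section BinomialTail

open Finset

/-- The remainder of `(1 + w) ^ μ` after the first `n` terms of its binomial series. -/
def binomialTail (μ : ℝ) (n : ℕ) (w : ℝ) : ℝ :=
  (1 + w) ^ μ - ∑ j ∈ range n, Ring.choose μ j * w ^ j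

lemma binomialTail_succ_zero (μ : ℝ) (n : ℕ) : binomialTail μ (n + 1) 0 = 0 := by
  simp [binomialTail, sum_range_succ']

lemma hasDerivAt_binomialTail_succ (μ : ℝ) (n : ℕ) {w : ℝ} (hw : -1 < w) :
    HasDerivAt (binomialTail μ (n + 1)) (μ * binomialTail (μ - 1) n w) w := by
  have hpow : HasDerivAt (fun w : ℝ => (1 + w) ^ μ) (μ * (1 + w) ^ (μ - 1)) w := by
    simpa using ((hasDerivAt_id w).const_add 1).rpow_const (p := μ)
      (Or.inl (by simp only [id_eq]; linarith))
  have hsum : HasDerivAt (fun w : ℝ => ∑ j ∈ range (n + 1), Ring.choose μ j * w ^ j)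
      (μ * ∑ j ∈ range n, Ring.choose (μ - 1) j * w ^ j) w := by
    simp only [sum_range_succ' _ n, mul_sum, pow_zero]
    apply HasDerivAt.add_const
    refine HasDerivAt.fun_sum fun j _ => ?_
    refine ((hasDerivAt_pow (j + 1) w).const_mul (Ring.choose μ (j + 1))).congr_deriv ?_
    push_cast
    linear_combination w ^ j * succ_mul_ringChoose_succ μ j
  rw [binomialTail, mul_sub]
  exact hpow.sub hsum

/-- Integrates `n` times from `0` a lower bound for the `n`-th derivative of
`∑ i ∈ s, c i * (1 + w) ^ μ i`. -/
lemma le_sum_binomialTail {ι : Type*} (s : Finset ι) (e : ℕ) (lo a : ℝ) (n : ℕ) :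
    ∀ c μ : ι → ℝ,
      (∀ w ∈ Set.Icc 0 a, lo * w ^ e ≤
        ∑ i ∈ s, c i * (n.factorial * Ring.choose (μ i) n) * (1 + w) ^ (μ i - n)) →
      ∀ w ∈ Set.Icc 0 a, lo * (e.factorial / (e + n).factorial) * w ^ (e + n) ≤
        ∑ i ∈ s, c i * binomialTail (μ i) n w := by
  induction n with
  | zero =>
    intro c μ h w hw
    simpa [binomialTail, Ring.choose_zero_right, div_self, Nat.factorial_ne_zero] using h w hw
  | succ n ih =>
    intro c μ h
    have hderiv_le := ih (fun i => c i * μ i) (fun i => μ i - 1) fun w hw => by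
      refine (h w hw).trans_eq (sum_congr rfl fun i _ => ?_)
      have hsucc := succ_mul_ringChoose_succ (μ i) n
      rw [Nat.factorial_succ, Nat.cast_succ, sub_sub, add_comm (1 : ℝ) n]
      push_cast
      linear_combination c i * n.factorial * (1 + w) ^ (μ i - (n + 1)) * hsucc
    have hmonomial (w : ℝ) : HasDerivAt
        (fun w => lo * (e.factorial / (e + (n + 1)).factorial) * w ^ (e + (n + 1)))
        (lo * (e.factorial / (e + n).factorial) * w ^ (e + n)) w := by
      refine ((hasDerivAt_pow (e + (n + 1)) w).const_mul _).congr_deriv ?_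
      rw [← add_assoc, Nat.factorial_succ, Nat.add_sub_cancel]
      push_cast
      field_simp
    have htail {w : ℝ} (hw : 0 ≤ w) : HasDerivAt
        (fun w => ∑ i ∈ s, c i * binomialTail (μ i) (n + 1) w)
        (∑ i ∈ s, c i * μ i * binomialTail (μ i - 1) n w) w := by
      refine HasDerivAt.fun_sum fun i _ => ?_
      rw [mul_assoc]
      exact (hasDerivAt_binomialTail_succ (μ i) n (by linarith)).const_mul (c i)
    refine image_le_of_deriv_right_le_deriv_boundary
      (fun x _ => (hmonomial x).continuousAt.continuousWithinAt)
      (fun x _ => (hmonomial x).hasDerivWithinAt) ?_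
      (fun x hx => (htail hx.1).continuousAt.continuousWithinAt)
      (fun x hx => (htail hx.1).hasDerivWithinAt)
      fun x hx => hderiv_le x ⟨hx.1, hx.2.le⟩
    simp [binomialTail_succ_zero]

end BinomialTail

section Pade

open Finset

variable (ν : ℝ) (m n : ℕ)

/-- The coefficients of the Padé denominator of `(1 + w) ^ ν` in powers of `1 + w`, normalised so
that they are products of generalised binomial coefficients. -/
def padeCoeff (k : ℕ) : ℝ :=
  (-1) ^ (n - k) * (Ring.choose (ν + n) (n - k) * Ring.choose (ν + k - (m + 1 : ℕ)) k)

/-- The denominator, of degree `n`, of the `[m/n]` Padé approximant of `(1 + w) ^ ν` at `w = 0`. -/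
def padeDenom (w : ℝ) : ℝ :=
  ∑ k ∈ range (n + 1), padeCoeff ν m n k * (1 + w) ^ k

/-- The numerator, of degree `m`, of the `[m/n]` Padé approximant of `(1 + w) ^ ν` at `w = 0`:
the truncation of `padeDenom ν m n w * (1 + w) ^ ν`. -/
def padeNum (w : ℝ) : ℝ :=
  ∑ k ∈ range (n + 1), padeCoeff ν m n k * ∑ j ∈ range (m + 1), Ring.choose (ν + k) j * w ^ j

variable {ν m n}

lemma padeDenom_mul_rpow_sub_padeNum {w : ℝ} (hw : -1 < w) :
    padeDenom ν m n w * (1 + w) ^ ν - padeNum ν m n w =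
      ∑ k ∈ range (n + 1), padeCoeff ν m n k * binomialTail (ν + k) (m + 1) w := by
  rw [padeDenom, padeNum, sum_mul, ← sum_sub_distrib]
  refine sum_congr rfl fun k _ => ?_
  rw [binomialTail, Real.rpow_add (by linarith), Real.rpow_natCast]
  ring

lemma padeCoeff_mul_ringChoose {k : ℕ} (hk : k ≤ n) :
    padeCoeff ν m n k * Ring.choose (ν + k) (m + 1) = (m + n + 1).choose n *
      Ring.choose (ν + n) (m + n + 1) * ((-1) ^ (n - k) * n.choose k) := by
  have hinner := Ring.choose_smul_choose (ν + k) (Nat.le_add_right (m + 1) k)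
  have houter := Ring.choose_smul_choose (ν + n) (show n - k ≤ m + n + 1 by omega)
  have hnat := Nat.choose_mul (n := m + n + 1) (Nat.sub_le n k)
  rw [nsmul_eq_mul, Nat.add_sub_cancel_left] at hinner
  rw [nsmul_eq_mul, show m + n + 1 - (n - k) = m + 1 + k by omega, Nat.cast_sub hk,
    show ν + n - (n - k) = ν + k by ring] at houter
  rw [Nat.choose_symm hk, show m + n + 1 - (n - k) = m + 1 + k by omega,
    show n - (n - k) = k by omega, ← Nat.choose_symm_add] at hnat
  have hcast : ((m + n + 1).choose n : ℝ) * n.choose k =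
      (m + n + 1).choose (n - k) * (m + 1 + k).choose (m + 1) := by exact_mod_cast hnat
  rw [padeCoeff]
  linear_combination (-1) ^ (n - k) * (-Ring.choose (ν + n) (n - k) * hinner -
    (m + 1 + k).choose (m + 1) * houter - Ring.choose (ν + n) (m + n + 1) * hcast)

/-- The `(m + 1)`-st derivative of the Padé remainder has a zero of order `n` at `0`. -/
lemma sum_padeCoeff_mul_rpow {w : ℝ} (hw : -1 < w) :
    ∑ k ∈ range (n + 1), padeCoeff ν m n k *
        ((m + 1).factorial * Ring.choose (ν + k) (m + 1)) * (1 + w) ^ (ν + k - (m + 1 : ℕ)) =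
      (m + 1).factorial * (m + n + 1).choose n * Ring.choose (ν + n) (m + n + 1) * w ^ n *
        (1 + w) ^ (ν - (m + 1 : ℕ)) := by
  have hbinom : w ^ n = ∑ k ∈ range (n + 1), (1 + w) ^ k * (-1) ^ (n - k) * n.choose k := by
    rw [← add_pow, add_neg_cancel_comm]
  rw [hbinom, mul_sum, sum_mul]
  refine sum_congr rfl fun k hk => ?_
  have hk : k ≤ n := Nat.lt_succ_iff.mp (mem_range.mp hk)
  rw [add_sub_right_comm, Real.rpow_add (by linarith), Real.rpow_natCast]
  linear_combination (m + 1).factorial * (1 + w) ^ k * (1 + w) ^ (ν - (m + 1 : ℕ)) *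
    padeCoeff_mul_ringChoose (ν := ν) (m := m) hk

lemma factorial_mul_choose_mul_factorial_div (m n : ℕ) :
    ((m + 1).factorial * (m + n + 1).choose n : ℝ) *
      (n.factorial / (n + (m + 1)).factorial) = 1 := by
  rw [show n + (m + 1) = m + 1 + n by ring, ← Nat.add_choose_mul_factorial_mul_factorial (m + 1) n,
    show m + 1 + n = m + n + 1 by ring]
  have hchoose : ((m + n + 1).choose n : ℝ) ≠ 0 :=
    Nat.cast_ne_zero.mpr (Nat.choose_pos (by omega)).ne'
  push_cast
  field_simp

lemma one_add_rpow_le_one (hν1 : ν ≤ 1) (m : ℕ) {x : ℝ} (hx : 0 ≤ x) :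
    (1 + x) ^ (ν - (m + 1 : ℕ)) ≤ 1 := by
  refine Real.rpow_le_one_of_one_le_of_nonpos (by linarith) ?_
  push_cast
  linarith [m.cast_nonneg (α := ℝ)]

lemma inv_two_pow_le_one_add_rpow (hν0 : 0 ≤ ν) (m : ℕ) {x : ℝ} (hx : x ∈ Set.Icc 0 1) :
    ((2 : ℝ) ^ (m + 1))⁻¹ ≤ (1 + x) ^ (ν - (m + 1 : ℕ)) := by
  obtain ⟨hx0, hx1⟩ := hx
  rw [Real.rpow_sub (by linarith), Real.rpow_natCast, ← one_div]
  gcongr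
  · exact Real.one_le_rpow (by linarith) hν0
  · linarith

lemma padeRemainder_bounds (hν0 : 0 ≤ ν) (hν1 : ν ≤ 1)
    (hc : Ring.choose (ν + n) (m + n + 1) ≠ 0) {w : ℝ} (hw : w ∈ Set.Icc 0 1) :
    (2 ^ (m + 1))⁻¹ * w ^ (m + n + 1) ≤
        (padeDenom ν m n w * (1 + w) ^ ν - padeNum ν m n w) / Ring.choose (ν + n) (m + n + 1) ∧
      (padeDenom ν m n w * (1 + w) ^ ν - padeNum ν m n w) / Ring.choose (ν + n) (m + n + 1) ≤
        w ^ (m + n + 1) := by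
  set c := Ring.choose (ν + n) (m + n + 1) with hc_def
  set B : ℝ := (m + 1).factorial * (m + n + 1).choose n with hB_def
  have hB1 : B * (n.factorial / (n + (m + 1)).factorial) = 1 :=
    factorial_mul_choose_mul_factorial_div m n
  have hderiv {x : ℝ} (hx : 0 ≤ x) : ∑ k ∈ range (n + 1), padeCoeff ν m n k / c *
      ((m + 1).factorial * Ring.choose (ν + k) (m + 1)) * (1 + x) ^ (ν + k - (m + 1 : ℕ)) =
      B * x ^ n * (1 + x) ^ (ν - (m + 1 : ℕ)) := by
    simp_rw [div_mul_eq_mul_div, ← sum_div]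
    rw [sum_padeCoeff_mul_rpow (by linarith), ← hc_def, ← hB_def]
    field_simp
  have hlower := le_sum_binomialTail (range (n + 1)) n (B * (2 ^ (m + 1))⁻¹) 1 (m + 1)
    (fun k => padeCoeff ν m n k / c) (fun k => ν + k) (fun x hx => by
      rw [hderiv hx.1, mul_right_comm]
      have := hx.1
      gcongr
      exact inv_two_pow_le_one_add_rpow hν0 m hx) w hw
  have hupper := le_sum_binomialTail (range (n + 1)) n (-B) 1 (m + 1)
    (fun k => -(padeCoeff ν m n k / c)) (fun k => ν + k) (fun x hx => by
      simp only [neg_mul, sum_neg_distrib, hderiv hx.1, neg_le_neg_iff]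
      have := hx.1
      exact mul_le_of_le_one_right (by positivity) (one_add_rpow_le_one hν1 m hx.1)) w hw
  rw [padeDenom_mul_rpow_sub_padeNum (by linarith [hw.1]), sum_div]
  simp_rw [mul_div_right_comm]
  simp only [neg_mul, sum_neg_distrib, neg_le_neg_iff, hB1, one_mul] at hupper
  rw [mul_right_comm B, hB1, one_mul] at hlower
  rw [show m + n + 1 = n + (m + 1) by ring]
  exact ⟨hlower, hupper⟩

lemma ringChoose_add_natCast_ne_zero (hν0 : 0 < ν) (hν1 : ν < 1) (n j : ℕ) :
    Ring.choose (ν + n) j ≠ 0 := by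
  rw [ringChoose_eq_prod_div]
  refine div_ne_zero (prod_ne_zero_iff.mpr fun i _ hi => ?_) (by positivity)
  have hint : ν = ((i - n : ℤ) : ℝ) := by
    push_cast
    linarith
  rw [hint] at hν0 hν1
  have hpos : 0 < (i - n : ℤ) := by exact_mod_cast hν0
  have hlt : (i - n : ℤ) < 1 := by exact_mod_cast hν1
  omega

lemma abs_padeCoeff_le (hν0 : 0 ≤ ν) (hν1 : ν ≤ 1) {k : ℕ} (hk : k ≤ n) :
    |padeCoeff ν m n k| ≤ 9 ^ (m + n + 1) := by
  have hkn : (k : ℝ) ≤ n := by exact_mod_cast hk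
  have hfirst : |Ring.choose (ν + n) (n - k)| ≤ 3 ^ (m + n + 1) := by
    refine abs_ringChoose_le fun i hi => ?_
    have hi' : (i : ℝ) ≤ n := by exact_mod_cast (by omega : i ≤ n)
    push_cast
    rw [abs_le]
    constructor <;> linarith [i.cast_nonneg (α := ℝ), m.cast_nonneg (α := ℝ)]
  have hsecond : |Ring.choose (ν + k - (m + 1 : ℕ)) k| ≤ 3 ^ (m + n + 1) := by
    refine abs_ringChoose_le fun i hi => ?_
    have hi' : (i : ℝ) ≤ k := by exact_mod_cast hi.le
    push_cast
    rw [abs_le]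
    constructor <;>
      linarith [i.cast_nonneg (α := ℝ), k.cast_nonneg (α := ℝ), m.cast_nonneg (α := ℝ)]
  calc |padeCoeff ν m n k|
      = |Ring.choose (ν + n) (n - k)| * |Ring.choose (ν + k - (m + 1 : ℕ)) k| := by
        rw [padeCoeff, abs_mul, abs_mul, abs_pow, abs_neg, abs_one, one_pow, one_mul]
    _ ≤ 3 ^ (m + n + 1) * 3 ^ (m + n + 1) := by gcongr
    _ = 9 ^ (m + n + 1) := by rw [← mul_pow]; norm_num

lemma abs_padeDenom_le (hν0 : 0 ≤ ν) (hν1 : ν ≤ 1) {w : ℝ} (hw : w ∈ Set.Icc 0 1) :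
    |padeDenom ν m n w| ≤ 36 ^ (m + n + 1) := by
  obtain ⟨hw0, hw1⟩ := hw
  have hterm : ∀ k ∈ range (n + 1), |padeCoeff ν m n k * (1 + w) ^ k| ≤
      9 ^ (m + n + 1) * 2 ^ (m + n + 1) := by
    intro k hk
    have hk : k ≤ n := Nat.lt_succ_iff.mp (mem_range.mp hk)
    rw [abs_mul, abs_of_nonneg (pow_nonneg (by linarith : 0 ≤ 1 + w) k)]
    gcongr
    · exact abs_padeCoeff_le hν0 hν1 hk
    · calc (1 + w) ^ k ≤ 2 ^ k := by gcongr; linarith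
        _ ≤ 2 ^ (m + n + 1) := pow_le_pow_right₀ one_le_two (by omega)
  have hcard : (n + 1 : ℝ) ≤ 2 ^ (m + n + 1) := by
    exact_mod_cast (by omega : n + 1 ≤ m + n + 1).trans Nat.lt_two_pow_self.le
  calc |padeDenom ν m n w| ≤ ∑ k ∈ range (n + 1), |padeCoeff ν m n k * (1 + w) ^ k| :=
        abs_sum_le_sum_abs _ _
    _ ≤ (n + 1) * (9 ^ (m + n + 1) * 2 ^ (m + n + 1)) := by
        simpa using sum_le_card_nsmul _ _ _ hterm
    _ ≤ 2 ^ (m + n + 1) * (9 ^ (m + n + 1) * 2 ^ (m + n + 1)) := by gcongr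
    _ = 36 ^ (m + n + 1) := by rw [← mul_pow, ← mul_pow]; norm_num

section Integrality

variable (b : ℕ)

lemma mul_add_natCast_mem_bot {x : ℝ} (hx : b * x ∈ (⊥ : Subring ℝ)) (k : ℕ) :
    b * (x + k) ∈ (⊥ : Subring ℝ) := by
  rw [mul_add]
  exact add_mem hx (mul_mem (natCast_mem _ b) (natCast_mem _ k))

variable [Fact b.Prime]

lemma pow_mul_padeCoeff_mem_bot (hν : b * ν ∈ (⊥ : Subring ℝ)) {k : ℕ} (hk : k ≤ n) :
    (b : ℝ) ^ (2 * n) * padeCoeff ν m n k ∈ (⊥ : Subring ℝ) := by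
  have hfirst := pow_mul_ringChoose_mem_bot b (mul_add_natCast_mem_bot b hν n) (n - k)
  have hshift : b * (ν + k - (m + 1 : ℕ)) ∈ (⊥ : Subring ℝ) := by
    rw [mul_sub]
    exact sub_mem (mul_add_natCast_mem_bot b hν k) (mul_mem (natCast_mem _ b) (natCast_mem _ _))
  have hsecond := pow_mul_ringChoose_mem_bot b hshift k
  have hsign : (-1 : ℝ) ^ (n - k) ∈ (⊥ : Subring ℝ) := pow_mem (neg_mem (one_mem _)) _
  convert mul_mem hsign (mul_mem hfirst hsecond) using 1
  rw [padeCoeff, show 2 * n = 2 * (n - k) + 2 * k by omega, pow_add]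
  ring

lemma pow_mul_padeDenom_mem_bot (hν : b * ν ∈ (⊥ : Subring ℝ)) {D : ℕ} (hD : D ≠ 0) (a : ℕ) :
    (D : ℝ) ^ n * ((b : ℝ) ^ (2 * n) * padeDenom ν m n (a / D)) ∈ (⊥ : Subring ℝ) := by
  rw [padeDenom, mul_sum, mul_sum]
  refine sum_mem fun k hk => ?_
  have hk : k ≤ n := Nat.lt_succ_iff.mp (mem_range.mp hk)
  convert mul_mem (pow_mul_padeCoeff_mem_bot (m := m) b hν hk)
    (natCast_mem (⊥ : Subring ℝ) ((D + a) ^ k * D ^ (n - k))) using 1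
  have hsplit : (D : ℝ) ^ n = D ^ (n - k) * D ^ k := by rw [← pow_add, Nat.sub_add_cancel hk]
  have hDa : (D + a : ℝ) = D * (1 + a / D) := by field_simp
  push_cast
  rw [hsplit, hDa, mul_pow]
  ring

lemma pow_mul_padeNum_mem_bot (hν : b * ν ∈ (⊥ : Subring ℝ)) {D : ℕ} (hD : D ≠ 0) (a : ℕ) :
    (D : ℝ) ^ m * ((b : ℝ) ^ (2 * m + 2 * n) * padeNum ν m n (a / D)) ∈ (⊥ : Subring ℝ) := by
  simp only [padeNum, mul_sum]
  refine sum_mem fun k hk => sum_mem fun j hj => ?_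
  have hk : k ≤ n := Nat.lt_succ_iff.mp (mem_range.mp hk)
  have hj : j ≤ m := Nat.lt_succ_iff.mp (mem_range.mp hj)
  have hchoose := pow_mul_ringChoose_mem_bot b (mul_add_natCast_mem_bot b hν k) j
  convert mul_mem (mul_mem (pow_mul_padeCoeff_mem_bot (m := m) b hν hk) hchoose)
    (natCast_mem (⊥ : Subring ℝ) (b ^ (2 * (m - j)) * (a ^ j * D ^ (m - j)))) using 1
  have hsplit : (D : ℝ) ^ m = D ^ (m - j) * D ^ j := by rw [← pow_add, Nat.sub_add_cancel hj]
  have hsplit' : (b : ℝ) ^ (2 * m) = b ^ (2 * (m - j)) * b ^ (2 * j) := by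
    rw [← pow_add, ← mul_add, Nat.sub_add_cancel hj]
  have ha : (a : ℝ) ^ j = D ^ j * (a / D) ^ j := by rw [← mul_pow]; field_simp
  push_cast
  rw [pow_add, hsplit, hsplit', ha]
  ring

end Integrality

lemma one_le_abs_of_mem_bot {x : ℝ} (hx : x ∈ (⊥ : Subring ℝ)) (hx0 : x ≠ 0) : 1 ≤ |x| := by
  obtain ⟨z, rfl⟩ := Subring.mem_bot.mp hx
  exact_mod_cast Int.one_le_abs (Int.cast_ne_zero.mp hx0)

end Pade

section Gap

lemma abs_ringChoose_add_natCast_le {ν : ℝ} (hν0 : 0 ≤ ν) (hν1 : ν ≤ 1) (m n : ℕ) :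
    |Ring.choose (ν + n) (m + n + 1)| ≤ 3 ^ (m + n + 1) := by
  refine abs_ringChoose_le fun i hi => ?_
  have hi' : (i : ℝ) ≤ m + n := by exact_mod_cast Nat.lt_succ_iff.mp hi
  push_cast
  rw [abs_le]
  constructor <;> linarith [i.cast_nonneg (α := ℝ), m.cast_nonneg (α := ℝ)]

variable (b : ℕ) [hb : Fact b.Prime]

lemma inv_natCast_prime_mem_Ioo : (b : ℝ)⁻¹ ∈ Set.Ioo 0 1 :=
  ⟨inv_pos.mpr (by exact_mod_cast hb.out.pos),
    inv_lt_one_of_one_lt₀ (by exact_mod_cast hb.out.one_lt)⟩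

lemma mul_inv_natCast_prime_mem_bot : b * (b : ℝ)⁻¹ ∈ (⊥ : Subring ℝ) := by
  simp [hb.out.ne_zero, one_mem]

lemma abs_padeRemainder_inv_bounds (m n : ℕ) {w : ℝ} (hw : w ∈ Set.Icc 0 1) :
    w ^ (m + n + 1) ≤ 2 ^ (m + n + 1) * |(b : ℝ) ^ (2 * (m + n + 1)) *
        (padeDenom (b : ℝ)⁻¹ m n w * (1 + w) ^ (b : ℝ)⁻¹ - padeNum (b : ℝ)⁻¹ m n w)| ∧
      |(b : ℝ) ^ (2 * (m + n + 1)) *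
        (padeDenom (b : ℝ)⁻¹ m n w * (1 + w) ^ (b : ℝ)⁻¹ - padeNum (b : ℝ)⁻¹ m n w)| ≤
        (3 * b ^ 2) ^ (m + n + 1) * w ^ (m + n + 1) := by
  obtain ⟨hν0, hν1⟩ := inv_natCast_prime_mem_Ioo b
  have hw0 := hw.1
  have hc0 : Ring.choose ((b : ℝ)⁻¹ + n) (m + n + 1) ≠ 0 :=
    ringChoose_add_natCast_ne_zero hν0 hν1 n _
  have hc3 := abs_ringChoose_add_natCast_le hν0.le hν1.le m n
  have hc1 := one_le_abs_of_mem_bot (pow_mul_ringChoose_mem_bot b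
    (mul_add_natCast_mem_bot b (mul_inv_natCast_prime_mem_bot b) n) (m + n + 1))
    (mul_ne_zero (pow_ne_zero _ (Nat.cast_ne_zero.mpr hb.out.ne_zero)) hc0)
  obtain ⟨hlo, hhi⟩ := padeRemainder_bounds hν0.le hν1.le hc0 hw
  set c := Ring.choose ((b : ℝ)⁻¹ + n) (m + n + 1)
  set R := padeDenom (b : ℝ)⁻¹ m n w * (1 + w) ^ (b : ℝ)⁻¹ - padeNum (b : ℝ)⁻¹ m n w
  have hr0 : 0 ≤ R / c := le_trans (by positivity) hlo
  have hR : |(b : ℝ) ^ (2 * (m + n + 1)) * R| = |(b : ℝ) ^ (2 * (m + n + 1)) * c| * (R / c) := by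
    rw [← abs_of_nonneg hr0, ← abs_mul, mul_assoc, mul_div_cancel₀ _ hc0]
  rw [hR]
  constructor
  · calc w ^ (m + n + 1) = 2 ^ (m + 1) * ((2 ^ (m + 1))⁻¹ * w ^ (m + n + 1)) := by field_simp
      _ ≤ 2 ^ (m + n + 1) * (1 * (R / c)) := by
        rw [one_mul]
        gcongr
        · exact one_le_two
        · omega
      _ ≤ _ := by gcongr
  · rw [abs_mul, abs_of_nonneg (by positivity), mul_comm _ |c|, mul_pow, ← pow_mul]
    gcongr

lemma exists_approx_root (m n : ℕ) {D a : ℕ} (hD : D ≠ 0) (ha : a ≤ D) : ∃ Q P : ℝ,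
    D ^ n * Q ∈ (⊥ : Subring ℝ) ∧ D ^ m * P ∈ (⊥ : Subring ℝ) ∧
      |Q| ≤ (36 * b ^ 2) ^ (m + n + 1) ∧
      (a / D : ℝ) ^ (m + n + 1) ≤ 2 ^ (m + n + 1) * |Q * (1 + a / D : ℝ) ^ (b : ℝ)⁻¹ - P| ∧
      |Q * (1 + a / D : ℝ) ^ (b : ℝ)⁻¹ - P| ≤
        (3 * b ^ 2) ^ (m + n + 1) * (a / D : ℝ) ^ (m + n + 1) := by
  have hw : (a / D : ℝ) ∈ Set.Icc 0 1 :=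
    ⟨by positivity, div_le_one_of_le₀ (by exact_mod_cast ha) D.cast_nonneg⟩
  obtain ⟨hν0, hν1⟩ := inv_natCast_prime_mem_Ioo b
  have hν := mul_inv_natCast_prime_mem_bot b
  have hbmem (k : ℕ) : (b : ℝ) ^ k ∈ (⊥ : Subring ℝ) := pow_mem (natCast_mem _ b) k
  refine ⟨(b : ℝ) ^ (2 * (m + n + 1)) * padeDenom (b : ℝ)⁻¹ m n (a / D),
    (b : ℝ) ^ (2 * (m + n + 1)) * padeNum (b : ℝ)⁻¹ m n (a / D), ?_, ?_, ?_, ?_⟩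
  · convert mul_mem (hbmem (2 * (m + 1))) (pow_mul_padeDenom_mem_bot (m := m) (n := n) b hν hD a)
      using 1
    ring
  · convert mul_mem (hbmem 2) (pow_mul_padeNum_mem_bot (m := m) (n := n) b hν hD a) using 1
    ring
  · rw [abs_mul, abs_of_nonneg (by positivity), mul_comm, mul_pow, ← pow_mul]
    gcongr
    exact abs_padeDenom_le hν0.le hν1.le hw
  · rw [mul_assoc, ← mul_sub]
    exact abs_padeRemainder_inv_bounds b m n hw

lemma abs_rpow_inv_sub_le {u w ρ : ℝ} (hu : u ≤ 1) (hw : 0 ≤ w) (hρ : 0 < ρ)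
    (h : ρ ^ b * (1 + w) = 1 + u) : |(1 + u) ^ (b : ℝ)⁻¹ - ρ| ≤ 2 * w := by
  obtain ⟨hν0, hν1⟩ := inv_natCast_prime_mem_Ioo b
  have hroot : (1 + u) ^ (b : ℝ)⁻¹ = ρ * (1 + w) ^ (b : ℝ)⁻¹ := by
    rw [← h, Real.mul_rpow (by positivity) (by positivity),
      Real.pow_rpow_inv_natCast hρ.le hb.out.ne_zero]
  have hx1 : 1 ≤ (1 + w) ^ (b : ℝ)⁻¹ := Real.one_le_rpow (by linarith) hν0.le
  have hx2 : (1 + w) ^ (b : ℝ)⁻¹ ≤ 1 + w := by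
    simpa using Real.rpow_le_rpow_of_exponent_le (by linarith : 1 ≤ 1 + w) hν1.le
  have hρ2 : ρ ≤ 2 := by
    by_contra! hlt
    have hpow : ρ ≤ ρ ^ b := le_self_pow₀ (by linarith) hb.out.ne_zero
    nlinarith
  rw [hroot, ← mul_sub_one, abs_of_nonneg (mul_nonneg hρ.le (by linarith))]
  exact mul_le_mul hρ2 (by linarith) (by linarith) zero_le_two

/-- Thue's gap principle. A rational `ρ` close to `(1 + a / D) ^ (1 / b)` is compared with the
Padé approximant `P / Q`: either the two coincide, or their difference is at least the inverse of
a common denominator. -/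
lemma root_gap (m n : ℕ) {D a : ℕ} (hD : D ≠ 0) (ha : a ≤ D) {w ρ M : ℝ} (hw : 0 ≤ w) (hρ : 0 < ρ)
    (hρb : ρ ^ b * (1 + w) = 1 + a / D) (hM : 0 < M) {g g' : ℤ} (hg : M = D ^ m * g)
    (hg' : M * ρ = D ^ n * g') :
    (a / D : ℝ) ^ (m + n + 1) ≤ (144 * b ^ 2) ^ (m + n + 1) * w ∨
      1 ≤ M * ((144 * b ^ 2) ^ (m + n + 1) * ((a / D : ℝ) ^ (m + n + 1) + w)) := by
  obtain ⟨Q, P, hQmem, hPmem, hQ, hlo, hhi⟩ := exists_approx_root b m n hD ha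
  have hu1 : (a / D : ℝ) ≤ 1 := div_le_one_of_le₀ (by exact_mod_cast ha) D.cast_nonneg
  have hroot := abs_rpow_inv_sub_le b hu1 hw hρ hρb
  set u : ℝ := a / D with hu_def
  have hu0 : 0 ≤ u := by positivity
  have hQdiff : |Q * ((1 + u) ^ (b : ℝ)⁻¹ - ρ)| ≤ (36 * b ^ 2) ^ (m + n + 1) * (2 * w) := by
    rw [abs_mul]
    gcongr
  have h2 : (2 : ℝ) ≤ 2 ^ (m + n + 1) := le_self_pow₀ one_le_two (by omega)
  by_cases hcoincide : Q * ρ = P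
  · left
    rw [← hcoincide, ← mul_sub] at hlo
    calc u ^ (m + n + 1)
        ≤ 2 ^ (m + n + 1) * ((36 * b ^ 2) ^ (m + n + 1) * (2 ^ (m + n + 1) * w)) :=
          hlo.trans (by gcongr; exact hQdiff.trans (by gcongr))
      _ = (144 * b ^ 2) ^ (m + n + 1) * w := by
          rw [← mul_assoc, ← mul_assoc, ← mul_pow, ← mul_pow]
          ring
  · right
    have hmem : M * (Q * ρ - P) ∈ (⊥ : Subring ℝ) := by
      convert sub_mem (mul_mem (intCast_mem (⊥ : Subring ℝ) g') hQmem)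
        (mul_mem (intCast_mem (⊥ : Subring ℝ) g) hPmem) using 1
      linear_combination Q * hg' - P * hg
    have hone := one_le_abs_of_mem_bot hmem (mul_ne_zero hM.ne' (sub_ne_zero.mpr hcoincide))
    rw [abs_mul, abs_of_pos hM] at hone
    refine hone.trans (mul_le_mul_of_nonneg_left ?_ hM.le)
    calc |Q * ρ - P|
        = |(Q * (1 + u) ^ (b : ℝ)⁻¹ - P) - Q * ((1 + u) ^ (b : ℝ)⁻¹ - ρ)| := by ring_nf
      _ ≤ (3 * b ^ 2) ^ (m + n + 1) * u ^ (m + n + 1) + (36 * b ^ 2) ^ (m + n + 1) * (2 * w) :=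
          (abs_sub _ _).trans (add_le_add hhi hQdiff)
      _ ≤ (144 * b ^ 2) ^ (m + n + 1) * u ^ (m + n + 1) +
          (36 * b ^ 2) ^ (m + n + 1) * (4 ^ (m + n + 1) * w) := by
          gcongr
          · norm_num
          · exact h2.trans (by gcongr; norm_num)
      _ = (144 * b ^ 2) ^ (m + n + 1) * (u ^ (m + n + 1) + w) := by
          rw [mul_add, ← mul_assoc _ (4 ^ _), ← mul_pow _ 4,
            show (36 * b ^ 2 * 4 : ℝ) = 144 * b ^ 2 by ring]

lemma log_cases_of_gap {N : ℕ} {C u w M : ℝ} (hC : 0 < C) (hu : 0 < u) (hw : 0 < w) (hM : 0 < M)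
    (h : u ^ N ≤ C ^ N * w ∨ 1 ≤ M * (C ^ N * (u ^ N + w))) :
    N * Real.log u ≤ N * Real.log C + Real.log w ∨
      0 ≤ Real.log 2 + Real.log M + N * Real.log C + N * Real.log u ∨
      0 ≤ Real.log 2 + Real.log M + N * Real.log C + Real.log w := by
  rcases h with hle | hone
  · left
    have hlog := Real.log_le_log (by positivity) hle
    rwa [Real.log_pow, Real.log_mul (by positivity) (by positivity), Real.log_pow] at hlog
  · right
    have hlog_of_one_le {y : ℝ} (hy : 0 < y) (h1 : 1 ≤ 2 * M * C ^ N * y) :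
        0 ≤ Real.log 2 + Real.log M + N * Real.log C + Real.log y := by
      have hlog := Real.log_nonneg h1
      rwa [Real.log_mul (by positivity) hy.ne', Real.log_mul (by positivity) (by positivity),
        Real.log_mul two_ne_zero hM.ne', Real.log_pow] at hlog
    rw [← Real.log_pow u N]
    rcases le_total w (u ^ N) with hwu | hwu
    · exact Or.inl (hlog_of_one_le (by positivity)
        (hone.trans (by nlinarith [mul_le_mul_of_nonneg_left hwu (by positivity : 0 ≤ M * C ^ N)])))
    · exact Or.inr (hlog_of_one_le hw
        (hone.trans (by nlinarith [mul_le_mul_of_nonneg_left hwu (by positivity : 0 ≤ M * C ^ N)])))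

lemma exists_nat_bracket {α β x₀ x₁ : ℝ} (hα : 0 < α) (hx₀ : 0 < x₀) {k : ℕ}
    (hk : (α * k + β) * x₀ ≤ x₁) :
    ∃ n : ℕ, k ≤ n ∧ (α * n + β) * x₀ ≤ x₁ ∧ x₁ < (α * (n + 1) + β) * x₀ := by
  set t := (x₁ / x₀ - β) / α with ht_def
  have hbracket {y : ℝ} : y ≤ t ↔ (α * y + β) * x₀ ≤ x₁ := by
    rw [ht_def, le_div_iff₀ hα, le_sub_iff_add_le, le_div_iff₀ hx₀, mul_comm y]
  have hkt : (k : ℝ) ≤ t := hbracket.mpr hk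
  refine ⟨⌊t⌋₊, Nat.le_floor hkt, hbracket.mp (Nat.floor_le (k.cast_nonneg.trans hkt)), ?_⟩
  rw [← not_le, ← hbracket, not_le]
  exact Nat.lt_floor_add_one t

end Gap

/-- A rational approximation `p / q` to the cube root of `9` with the tiny error term
`p ^ 3 - 9 * q ^ 3 = A ^ 3`. -/
structure IsCubicNearMiss (q A p : ℕ) : Prop where
  error_pos : 0 < A
  cube_eq : p ^ 3 = 9 * q ^ 3 + A ^ 3
  error_pow_le : A ^ 30 ≤ q

namespace IsCubicNearMiss

variable {q A p q' A' p' : ℕ}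

lemma q_pos (h : IsCubicNearMiss q A p) : 0 < q :=
  (pow_pos h.error_pos 30).trans_le h.error_pow_le

lemma p_pos (h : IsCubicNearMiss q A p) : 0 < p := by
  have hpow : 0 < p ^ 3 := by
    rw [h.cube_eq]
    have := h.q_pos
    positivity
  exact Nat.pos_of_ne_zero (ne_zero_pow three_ne_zero hpow.ne')

lemma error_cube_le (h : IsCubicNearMiss q A p) : A ^ 3 ≤ q ^ 3 :=
  Nat.pow_le_pow_left ((Nat.le_self_pow (by norm_num) A).trans h.error_pow_le) 3

lemma log_ratio_eq (h : IsCubicNearMiss q A p) :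
    Real.log ((A : ℝ) ^ 3 / (9 * q ^ 3)) =
      3 * Real.log A - (Real.log 9 + 3 * Real.log q) := by
  have hA : (0 : ℝ) < A := by exact_mod_cast h.error_pos
  have hq : (0 : ℝ) < q := by exact_mod_cast h.q_pos
  rw [Real.log_div (by positivity) (by positivity), Real.log_mul (by norm_num) (by positivity),
    Real.log_pow, Real.log_pow]
  norm_num

lemma log_ratio_le (h : IsCubicNearMiss q A p) :
    Real.log ((A : ℝ) ^ 3 / (9 * q ^ 3)) ≤ -(29 / 10) * Real.log q := by
  have hA : (0 : ℝ) < A := by exact_mod_cast h.error_pos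
  have hlog := Real.log_le_log (by positivity)
    (by exact_mod_cast h.error_pow_le : (A : ℝ) ^ 30 ≤ q)
  rw [Real.log_pow, Nat.cast_ofNat] at hlog
  have h9 : 0 ≤ Real.log 9 := Real.log_nonneg (by norm_num)
  rw [h.log_ratio_eq]
  linarith

lemma le_log_ratio (h : IsCubicNearMiss q A p) :
    -Real.log 9 - 3 * Real.log q ≤ Real.log ((A : ℝ) ^ 3 / (9 * q ^ 3)) := by
  rw [h.log_ratio_eq]
  linarith [Real.log_natCast_nonneg A]

lemma log_p_le (h : IsCubicNearMiss q A p) : Real.log p ≤ Real.log q + Real.log 3 := by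
  have hp : (0 : ℝ) < p := by exact_mod_cast h.p_pos
  have hq : (0 : ℝ) < q := by exact_mod_cast h.q_pos
  have hle : p ≤ q * 3 := by
    refine (Nat.pow_le_pow_iff_left three_ne_zero).mp ?_
    have hcube := h.cube_eq
    have herror := h.error_cube_le
    rw [mul_pow]
    omega
  rw [← Real.log_mul hq.ne' three_ne_zero]
  exact Real.log_le_log hp (by exact_mod_cast hle)

lemma one_add_ratio (h : IsCubicNearMiss q A p) :
    1 + (A : ℝ) ^ 3 / (9 * q ^ 3) = p ^ 3 / (9 * q ^ 3) := by
  have hq : (0 : ℝ) < q := by exact_mod_cast h.q_pos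
  have heq : (p : ℝ) ^ 3 = 9 * q ^ 3 + A ^ 3 := by exact_mod_cast h.cube_eq
  rw [heq]
  field_simp

lemma log_gap (h : IsCubicNearMiss q A p) (h' : IsCubicNearMiss q' A' p') (n : ℕ) :
    (2 * n + 1) * Real.log ((A : ℝ) ^ 3 / (9 * q ^ 3)) ≤
        (2 * n + 1) * Real.log 1296 + Real.log ((A' : ℝ) ^ 3 / (9 * q' ^ 3)) ∨
      0 ≤ Real.log 2 + (n * (Real.log 9 + 3 * Real.log q) + Real.log q + Real.log p') +
        (2 * n + 1) * Real.log 1296 + (2 * n + 1) * Real.log ((A : ℝ) ^ 3 / (9 * q ^ 3)) ∨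
      0 ≤ Real.log 2 + (n * (Real.log 9 + 3 * Real.log q) + Real.log q + Real.log p') +
        (2 * n + 1) * Real.log 1296 + Real.log ((A' : ℝ) ^ 3 / (9 * q' ^ 3)) := by
  have : Fact (Nat.Prime 3) := ⟨Nat.prime_three⟩
  have hA : (0 : ℝ) < A := by exact_mod_cast h.error_pos
  have hA' : (0 : ℝ) < A' := by exact_mod_cast h'.error_pos
  have hq : (0 : ℝ) < q := by exact_mod_cast h.q_pos
  have hq' : (0 : ℝ) < q' := by exact_mod_cast h'.q_pos
  have hp : (0 : ℝ) < p := by exact_mod_cast h.p_pos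
  have hp' : (0 : ℝ) < p' := by exact_mod_cast h'.p_pos
  have hq0 := h.q_pos
  have hgap := root_gap 3 n n (D := 9 * q ^ 3) (a := A ^ 3)
    (w := (A' : ℝ) ^ 3 / (9 * q' ^ 3)) (ρ := p * q' / (q * p'))
    (M := (9 * q ^ 3) ^ n * (q * p')) (g := q * p') (g' := p * q') (by positivity)
    (h.error_cube_le.trans (Nat.le_mul_of_pos_left _ (by norm_num))) (by positivity) (by positivity)
    (by
      push_cast
      rw [h.one_add_ratio, h'.one_add_ratio]
      field_simp)
    (by positivity) (by push_cast; ring) (by push_cast; field_simp)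
  norm_num only [Nat.cast_mul, Nat.cast_pow, Nat.cast_ofNat] at hgap
  have hlog := log_cases_of_gap (by positivity) (by positivity) (by positivity) (by positivity) hgap
  rw [Real.log_mul (y := q * p') (by positivity) (by positivity), Real.log_pow,
    Real.log_mul (x := 9) (by norm_num) (by positivity), Real.log_mul hq.ne' hp'.ne',
    Real.log_pow] at hlog
  push_cast at hlog
  rwa [← two_mul, ← add_assoc (n * (Real.log 9 + 3 * Real.log q))] at hlog

lemma false_of_log_gap {n x₀ x₁ c l₉ l₂ l₃ lw₀ lw₁ lp : ℝ} (hn : 3 ≤ n) (hc : 0 ≤ c)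
    (hl₉ : 0 < l₉) (hl : l₂ + l₃ ≤ l₉) (hx₀ : 20 * (c + l₉) ≤ x₀)
    (hx₁ : (22 / 10 * n + 11 / 10) * x₀ ≤ x₁) (hx₁' : x₁ < (22 / 10 * (n + 1) + 11 / 10) * x₀)
    (hlw₀ : lw₀ ≤ -(29 / 10) * x₀) (hlw₀' : -l₉ - 3 * x₀ ≤ lw₀)
    (hlw₁ : lw₁ ≤ -(29 / 10) * x₁) (hlp : lp ≤ x₁ + l₃)
    (hgap : (2 * n + 1) * lw₀ ≤ (2 * n + 1) * c + lw₁ ∨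
      0 ≤ l₂ + (n * (l₉ + 3 * x₀) + x₀ + lp) + (2 * n + 1) * c + (2 * n + 1) * lw₀ ∨
      0 ≤ l₂ + (n * (l₉ + 3 * x₀) + x₀ + lp) + (2 * n + 1) * c + lw₁) : False := by
  have hnx : 3 * x₀ ≤ n * x₀ := by
    gcongr
    linarith
  have hnx' : n * (20 * (c + l₉)) ≤ n * x₀ := by gcongr
  have hnl : 0 ≤ n * l₉ := by positivity
  have hupper : (2 * n + 1) * lw₀ ≤ (2 * n + 1) * (-(29 / 10) * x₀) := by gcongr
  have hlower : (2 * n + 1) * (-l₉ - 3 * x₀) ≤ (2 * n + 1) * lw₀ := by gcongr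
  rcases hgap with hgap | hgap | hgap <;> linarith

lemma le_pow_ten (h : IsCubicNearMiss q A p) (h' : IsCubicNearMiss q' A' p')
    (hlarge : 20 * (Real.log 1296 + Real.log 9) ≤ Real.log q) : q' ≤ q ^ 10 := by
  by_contra! hlt
  have hlog1296 : 0 ≤ Real.log 1296 := Real.log_nonneg (by norm_num)
  have hlog9 : 0 < Real.log 9 := Real.log_pos (by norm_num)
  have hlog6 : Real.log 2 + Real.log 3 ≤ Real.log 9 := by
    rw [← Real.log_mul two_ne_zero three_ne_zero]
    exact Real.log_le_log (by norm_num) (by norm_num)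
  have hqq' : 10 * Real.log q ≤ Real.log q' := by
    have hq : (0 : ℝ) < q := by exact_mod_cast h.q_pos
    have hlog := Real.log_le_log (by positivity) (by exact_mod_cast hlt.le : (q : ℝ) ^ 10 ≤ q')
    rwa [Real.log_pow, Nat.cast_ofNat] at hlog
  obtain ⟨n, hn, hx₁, hx₁'⟩ := exists_nat_bracket (α := 22 / 10) (β := 11 / 10)
    (x₀ := Real.log q) (x₁ := Real.log q') (k := 3) (by norm_num) (by linarith)
    (by push_cast; linarith)
  exact false_of_log_gap (by exact_mod_cast hn) hlog1296 hlog9 hlog6 hlarge hx₁ hx₁'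
    h.log_ratio_le h.le_log_ratio h'.log_ratio_le h'.log_p_le (h.log_gap h' n)

theorem exists_bound : ∃ B : ℕ, ∀ q A p : ℕ, IsCubicNearMiss q A p → q ≤ B := by
  by_cases hex : ∃ q A p : ℕ, IsCubicNearMiss q A p ∧
      20 * (Real.log 1296 + Real.log 9) ≤ Real.log q
  · obtain ⟨q, A, p, h, hlarge⟩ := hex
    exact ⟨q ^ 10, fun q' A' p' h' => h.le_pow_ten h' hlarge⟩
  · push Not at hex
    refine ⟨⌈Real.exp (20 * (Real.log 1296 + Real.log 9))⌉₊, fun q A p h => ?_⟩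
    have hq : (q : ℝ) ≤ Real.exp (20 * (Real.log 1296 + Real.log 9)) :=
      (Real.log_le_iff_le_exp (by exact_mod_cast h.q_pos)).mp (hex q A p h).le
    exact_mod_cast hq.trans (Nat.le_ceil _)

end IsCubicNearMiss

/-- A value `d * z ^ 2` exceeding the power `3 ^ m` by the tiny positive error `k`. -/
structure IsSquareNearMiss (d m k z : ℕ) : Prop where
  error_pos : 0 < k
  eq : 3 ^ m + k = d * z ^ 2
  error_pow_le : k ^ 20 ≤ 3 ^ m

namespace IsSquareNearMiss

variable {d m k z m' k' z' : ℕ}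

lemma d_pos (h : IsSquareNearMiss d m k z) : 0 < d := by
  refine Nat.pos_of_ne_zero ?_
  rintro rfl
  simpa using h.eq

lemma z_pos (h : IsSquareNearMiss d m k z) : 0 < z := by
  refine Nat.pos_of_ne_zero ?_
  rintro rfl
  simpa using h.eq

lemma error_le (h : IsSquareNearMiss d m k z) : k ≤ 3 ^ m :=
  (Nat.le_self_pow (by norm_num) k).trans h.error_pow_le

lemma log_ratio_eq (h : IsSquareNearMiss d m k z) :
    Real.log ((k : ℝ) / 3 ^ m) = Real.log k - m * Real.log 3 := by
  have hk : (0 : ℝ) < k := by exact_mod_cast h.error_pos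
  rw [Real.log_div hk.ne' (by positivity), Real.log_pow]

lemma log_ratio_le (h : IsSquareNearMiss d m k z) :
    Real.log ((k : ℝ) / 3 ^ m) ≤ -(95 / 100) * (m * Real.log 3) := by
  have hk : (0 : ℝ) < k := by exact_mod_cast h.error_pos
  have hlog := Real.log_le_log (by positivity)
    (by exact_mod_cast h.error_pow_le : (k : ℝ) ^ 20 ≤ 3 ^ m)
  rw [Real.log_pow, Real.log_pow, Nat.cast_ofNat] at hlog
  rw [h.log_ratio_eq]
  linarith

lemma le_log_ratio (h : IsSquareNearMiss d m k z) :
    -(m * Real.log 3) ≤ Real.log ((k : ℝ) / 3 ^ m) := by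
  rw [h.log_ratio_eq]
  linarith [Real.log_natCast_nonneg k]

lemma log_z_le (h : IsSquareNearMiss d m k z) :
    Real.log z ≤ (m * Real.log 3 + Real.log 3) / 2 := by
  have hz : (0 : ℝ) < z := by exact_mod_cast h.z_pos
  have hle : z ^ 2 ≤ 3 ^ (m + 1) :=
    calc z ^ 2 ≤ d * z ^ 2 := Nat.le_mul_of_pos_left _ h.d_pos
      _ = 3 ^ m + k := h.eq.symm
      _ ≤ 3 ^ (m + 1) := by
        rw [pow_succ]
        linarith [h.error_le]
  have hlog := Real.log_le_log (by positivity) (by exact_mod_cast hle : (z : ℝ) ^ 2 ≤ 3 ^ (m + 1))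
  rw [Real.log_pow, Real.log_pow] at hlog
  push_cast at hlog
  linarith

lemma one_add_ratio (h : IsSquareNearMiss d m k z) :
    1 + (k : ℝ) / 3 ^ m = d * z ^ 2 / 3 ^ m := by
  have heq : (3 : ℝ) ^ m + k = d * z ^ 2 := by exact_mod_cast h.eq
  rw [← heq]
  field_simp

lemma log_gap (h : IsSquareNearMiss d m k z) (h' : IsSquareNearMiss d m' k' z') {s e : ℕ}
    (hm' : m' = m + 2 * (2 * (m * s) + e)) :
    (4 * s + 1) * Real.log ((k : ℝ) / 3 ^ m) ≤
        (4 * s + 1) * Real.log 576 + Real.log ((k' : ℝ) / 3 ^ m') ∨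
      0 ≤ Real.log 2 + (s * (m * Real.log 3) + Real.log z') + (4 * s + 1) * Real.log 576 +
        (4 * s + 1) * Real.log ((k : ℝ) / 3 ^ m) ∨
      0 ≤ Real.log 2 + (s * (m * Real.log 3) + Real.log z') + (4 * s + 1) * Real.log 576 +
        Real.log ((k' : ℝ) / 3 ^ m') := by
  have : Fact (Nat.Prime 2) := ⟨Nat.prime_two⟩
  have hk : (0 : ℝ) < k := by exact_mod_cast h.error_pos
  have hk' : (0 : ℝ) < k' := by exact_mod_cast h'.error_pos
  have hz : (0 : ℝ) < z := by exact_mod_cast h.z_pos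
  have hz' : (0 : ℝ) < z' := by exact_mod_cast h'.z_pos
  have hd : (0 : ℝ) < d := by exact_mod_cast h.d_pos
  have hgap := root_gap 2 s (3 * s) (D := 3 ^ m) (a := k) (w := (k' : ℝ) / 3 ^ m')
    (ρ := z * 3 ^ (2 * (m * s) + e) / z') (M := (3 ^ m) ^ s * z') (g := z') (g' := z * 3 ^ e)
    (by positivity) h.error_le (by positivity) (by positivity)
    (by
      push_cast
      rw [h.one_add_ratio, h'.one_add_ratio, hm', pow_add 3 m, pow_mul']
      field_simp)
    (by positivity) (by push_cast; ring)
    (by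
      push_cast
      rw [pow_add, ← pow_mul, ← pow_mul]
      field_simp
      ring)
  norm_num only [Nat.cast_pow, Nat.cast_ofNat] at hgap
  have hlog := log_cases_of_gap (by positivity) (by positivity) (by positivity) (by positivity) hgap
  rw [Real.log_mul (y := z') (by positivity) (by positivity), Real.log_pow, Real.log_pow,
    show s + 3 * s + 1 = 4 * s + 1 by ring] at hlog
  exact_mod_cast hlog

lemma false_of_log_gap {s y₀ y₁ c l₂ l₃ lw₀ lw₁ lz : ℝ} (hs : 4 ≤ s) (hc : 0 < c)
    (hl : l₂ + l₃ / 2 ≤ c) (hy₀ : 100 * c ≤ y₀)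
    (hy₁ : (43 / 10 * s + 15 / 10) * y₀ ≤ y₁) (hy₁' : y₁ < (43 / 10 * (s + 1) + 15 / 10) * y₀)
    (hlw₀ : lw₀ ≤ -(95 / 100) * y₀) (hlw₀' : -y₀ ≤ lw₀) (hlw₁ : lw₁ ≤ -(95 / 100) * y₁)
    (hlz : lz ≤ (y₁ + l₃) / 2)
    (hgap : (4 * s + 1) * lw₀ ≤ (4 * s + 1) * c + lw₁ ∨
      0 ≤ l₂ + (s * y₀ + lz) + (4 * s + 1) * c + (4 * s + 1) * lw₀ ∨
      0 ≤ l₂ + (s * y₀ + lz) + (4 * s + 1) * c + lw₁) : False := by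
  have hsy : 4 * y₀ ≤ s * y₀ := by
    gcongr
    linarith
  have hsy' : s * (100 * c) ≤ s * y₀ := by gcongr
  have hupper : (4 * s + 1) * lw₀ ≤ (4 * s + 1) * (-(95 / 100) * y₀) := by gcongr
  have hlower : (4 * s + 1) * (-y₀) ≤ (4 * s + 1) * lw₀ := by gcongr
  rcases hgap with hgap | hgap | hgap <;> linarith

lemma le_twenty_mul (h : IsSquareNearMiss d m k z) (h' : IsSquareNearMiss d m' k' z')
    (hparity : m ≡ m' [MOD 2]) (hlarge : 100 * Real.log 576 ≤ m * Real.log 3) :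
    m' ≤ 20 * m := by
  by_contra! hlt
  have hlog3 : 0 < Real.log 3 := Real.log_pos (by norm_num)
  have hlog576 : 0 < Real.log 576 := Real.log_pos (by norm_num)
  have hlog6 : Real.log 2 + Real.log 3 ≤ Real.log 576 := by
    rw [← Real.log_mul two_ne_zero three_ne_zero]
    exact Real.log_le_log (by norm_num) (by norm_num)
  have hm : (0 : ℝ) < m := pos_of_mul_pos_left (by linarith) hlog3.le
  have hmm' : (20 * m : ℝ) ≤ m' := by exact_mod_cast hlt.le
  obtain ⟨s, hs, hm', hm''⟩ := exists_nat_bracket (α := 43 / 10) (β := 15 / 10)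
    (x₀ := m) (x₁ := m') (k := 4) (by norm_num) hm (by push_cast; linarith)
  have hexp : (4 * s + 1) * m ≤ m' := by
    have hreal : (4 * s + 1) * (m : ℝ) ≤ m' := le_trans (by gcongr <;> norm_num) hm'
    exact_mod_cast hreal
  obtain ⟨e, he⟩ : ∃ e, m' = m + 2 * (2 * (m * s) + e) := by
    obtain ⟨f, hf⟩ := Nat.exists_eq_add_of_le hexp
    obtain ⟨e, rfl⟩ : 2 ∣ f := by
      rw [hf, show (4 * s + 1) * m + f = m + (2 * (2 * (s * m)) + f) by ring] at hparity
      have hzero : 0 ≡ 2 * (2 * (s * m)) + f [MOD 2] := Nat.ModEq.add_left_cancel' m hparity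
      exact (Nat.dvd_add_right (dvd_mul_right 2 _)).mp ((Nat.modEq_zero_iff_dvd).mp hzero.symm)
    exact ⟨e, by rw [hf]; ring⟩
  refine false_of_log_gap (y₀ := m * Real.log 3) (y₁ := m' * Real.log 3) (by exact_mod_cast hs)
    hlog576 (by linarith) hlarge ?_ ?_ h.log_ratio_le h.le_log_ratio h'.log_ratio_le h'.log_z_le
    (h.log_gap h' he)
  · rw [← mul_assoc]
    gcongr
  · rw [← mul_assoc]
    gcongr

lemma exists_bound_of_mod_two (d r : ℕ) :
    ∃ B : ℕ, ∀ m k z : ℕ, m % 2 = r → IsSquareNearMiss d m k z → m ≤ B := by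
  by_cases hex : ∃ m k z : ℕ, m % 2 = r ∧ IsSquareNearMiss d m k z ∧
      100 * Real.log 576 ≤ m * Real.log 3
  · obtain ⟨m, k, z, hr, h, hlarge⟩ := hex
    exact ⟨20 * m, fun m' k' z' hr' h' => h.le_twenty_mul h' (hr.trans hr'.symm) hlarge⟩
  · push Not at hex
    refine ⟨⌈100 * Real.log 576 / Real.log 3⌉₊, fun m k z hr h => ?_⟩
    have hm : (m : ℝ) ≤ 100 * Real.log 576 / Real.log 3 :=
      (le_div_iff₀ (Real.log_pos (by norm_num))).mpr (hex m k z hr h).le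
    exact_mod_cast hm.trans (Nat.le_ceil _)

theorem exists_bound (d : ℕ) : ∃ B : ℕ, ∀ m k z : ℕ, IsSquareNearMiss d m k z → m ≤ B := by
  choose B hB using exists_bound_of_mod_two d
  refine ⟨max (B 0) (B 1), fun m k z h => ?_⟩
  rcases Nat.mod_two_eq_zero_or_one m with hm | hm
  · exact (hB 0 m k z hm h).trans (le_max_left _ _)
  · exact (hB 1 m k z hm h).trans (le_max_right _ _)

end IsSquareNearMiss

section Pell

open Pell

variable {d : ℤ}

lemma pell_y_sq (γ : Solution₁ d) : (γ ^ 2).y = 2 * γ.x * γ.y := by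
  rw [pow_two, Solution₁.y_mul]
  ring

lemma pell_y_cube (γ : Solution₁ d) : (γ ^ 3).y = γ.y * (4 * γ.x ^ 2 - 1) := by
  rw [pow_succ, Solution₁.y_mul, pell_y_sq, pow_two, Solution₁.x_mul]
  linear_combination -γ.y * γ.prop

lemma pell_x_cube (γ : Solution₁ d) : (γ ^ 3).x = γ.x * (4 * γ.x ^ 2 - 3) := by
  rw [pow_succ, Solution₁.x_mul, pell_y_sq, pow_two, Solution₁.x_mul]
  linear_combination -3 * γ.x * γ.prop

lemma dvd_pell_y_mul {t : ℤ} {γ γ' : Solution₁ d} (h : t ∣ γ.y) (h' : t ∣ γ'.y) :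
    t ∣ (γ * γ').y := by
  rw [Solution₁.y_mul]
  exact dvd_add (h'.mul_left _) (h.mul_right _)

lemma dvd_pell_y_pow {t : ℤ} {γ : Solution₁ d} (h : t ∣ γ.y) (n : ℕ) : t ∣ (γ ^ n).y := by
  induction n with
  | zero => simp
  | succ n ih => exact pow_succ γ n ▸ dvd_pell_y_mul ih h

lemma dvd_pell_y_zpow {t : ℤ} {γ : Solution₁ d} (h : t ∣ γ.y) (n : ℤ) : t ∣ (γ ^ n).y := by
  obtain ⟨k, rfl | rfl⟩ := n.eq_nat_or_neg
  · rw [zpow_natCast]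
    exact dvd_pell_y_pow h k
  · rw [zpow_neg, zpow_natCast, Solution₁.y_inv]
    exact (dvd_pell_y_pow h k).neg_right

lemma dvd_pell_y_zpow_gcd {t : ℤ} {γ : Solution₁ d} {m n : ℤ} (hm : t ∣ (γ ^ m).y)
    (hn : t ∣ (γ ^ n).y) : t ∣ (γ ^ (Int.gcd m n : ℤ)).y := by
  rw [Int.gcd_eq_gcd_ab, zpow_add, zpow_mul, zpow_mul]
  exact dvd_pell_y_mul (dvd_pell_y_zpow hm _) (dvd_pell_y_zpow hn _)

lemma three_dvd_pell_y_pow_six (γ : Solution₁ d) : 3 ∣ (γ ^ 6).y := by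
  by_cases h : 3 ∣ γ.x
  · rw [show 6 = 2 * 3 by norm_num, pow_mul]
    refine dvd_pell_y_pow ?_ 3
    rw [pell_y_sq]
    exact (h.mul_left _).mul_right _
  · rw [show 6 = 3 * 2 by norm_num, pow_mul]
    refine dvd_pell_y_pow ?_ 2
    rw [pell_y_cube]
    refine Dvd.dvd.mul_left (Int.dvd_of_emod_eq_zero ?_) _
    have hmod : γ.x % 3 = 1 ∨ γ.x % 3 = 2 := by omega
    rcases hmod with hmod | hmod <;> simp [pow_two, Int.sub_emod, Int.mul_emod, hmod]

lemma three_pow_dvd_pell_y_cube {γ : Solution₁ d} {j : ℕ} (h : (3 : ℤ) ^ (j + 1) ∣ γ.y) :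
    (3 : ℤ) ^ (j + 2) ∣ (γ ^ 3).y := by
  rw [pell_y_cube, pow_succ (3 : ℤ) (j + 1)]
  refine mul_dvd_mul h ?_
  obtain ⟨t, ht⟩ : (3 : ℤ) ∣ γ.y := (dvd_pow_self 3 j.succ_ne_zero).trans h
  have hprop := γ.prop
  rw [ht] at hprop
  exact ⟨1 + 4 * d * 3 * t ^ 2, by linear_combination 4 * hprop⟩

lemma three_pow_dvd_pell_y_pow (γ : Solution₁ d) (j : ℕ) :
    (3 : ℤ) ^ (j + 1) ∣ (γ ^ (6 * 3 ^ j)).y := by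
  induction j with
  | zero => simpa using three_dvd_pell_y_pow_six γ
  | succ j ih =>
    rw [show 6 * 3 ^ (j + 1) = 6 * 3 ^ j * 3 by ring, pow_mul]
    exact three_pow_dvd_pell_y_cube ih

lemma three_pow_dvd_pell_x_of_cube {γ : Solution₁ d} {j : ℕ} (h : (3 : ℤ) ^ (j + 1) ∣ (γ ^ 3).x) :
    (3 : ℤ) ^ j ∣ γ.x := by
  rw [pell_x_cube] at h
  obtain ⟨t, ht⟩ : (3 : ℤ) ∣ γ.x := by
    have hdvd : (3 : ℤ) ∣ γ.x * (4 * γ.x ^ 2 - 3) := (dvd_pow_self 3 j.succ_ne_zero).trans h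
    have hcube : (3 : ℤ) ∣ 4 * γ.x ^ 3 := by
      have hsum := dvd_add hdvd (dvd_mul_right 3 γ.x)
      rwa [show γ.x * (4 * γ.x ^ 2 - 3) + 3 * γ.x = 4 * γ.x ^ 3 by ring] at hsum
    exact Int.prime_three.dvd_of_dvd_pow
      (IsCoprime.dvd_of_dvd_mul_left ⟨-1, 1, by norm_num⟩ hcube)
  have hfactor : γ.x * (4 * γ.x ^ 2 - 3) = 3 * (γ.x * (12 * t ^ 2 - 1)) := by
    rw [ht]
    ring
  rw [hfactor, pow_succ'] at h
  exact (IsCoprime.pow_left ⟨4 * t ^ 2, -1, by ring⟩).dvd_of_dvd_mul_right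
    (Int.dvd_of_mul_dvd_mul_left three_ne_zero h)

lemma three_pow_dvd_pell_x_of_pow {γ : Solution₁ d} {j k : ℕ}
    (h : (3 : ℤ) ^ (j + k) ∣ (γ ^ 3 ^ k).x) : (3 : ℤ) ^ j ∣ γ.x := by
  induction k with
  | zero => simpa using h
  | succ k ih =>
    rw [pow_succ 3 k, pow_mul] at h
    exact ih (three_pow_dvd_pell_x_of_cube h)

lemma abs_pell_x_pow_le (hd : 0 ≤ d) (γ : Solution₁ d) (k : ℕ) :
    |γ.x| ^ 3 ^ k ≤ |(γ ^ 3 ^ k).x| := by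
  induction k with
  | zero => simp
  | succ k ih =>
    have hx : 1 ≤ |(γ ^ 3 ^ k).x| := Int.one_le_abs (Solution₁.x_ne_zero hd _)
    rw [pow_succ 3 k, pow_mul, pow_mul]
    calc (|γ.x| ^ 3 ^ k) ^ 3 ≤ |(γ ^ 3 ^ k).x| ^ 3 := by gcongr
      _ = |(γ ^ 3 ^ k).x| * |(γ ^ 3 ^ k).x| ^ 2 := by ring
      _ ≤ |(γ ^ 3 ^ k).x| * |4 * (γ ^ 3 ^ k).x ^ 2 - 3| := by
        gcongr
        refine le_trans ?_ (le_abs_self _)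
        rw [← sq_abs (γ ^ 3 ^ k).x]
        nlinarith
      _ = |((γ ^ 3 ^ k) ^ 3).x| := by rw [pell_x_cube, abs_mul]

lemma gcd_three_pow_dvd_nine {n : ℤ} (hn : ¬ 27 ∣ n) (k : ℕ) : Int.gcd n (3 ^ k) ∣ 9 := by
  have hdvd : Int.gcd n (3 ^ k) ∣ 3 ^ k := by exact_mod_cast Int.gcd_dvd_right n (3 ^ k)
  obtain ⟨j, -, hj⟩ := (Nat.dvd_prime_pow Nat.prime_three).mp hdvd
  have hjn : (3 : ℤ) ^ j ∣ n := by exact_mod_cast hj ▸ Int.gcd_dvd_left n (3 ^ k)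
  have hj2 : j ≤ 2 := by
    by_contra! hj3
    exact hn ((pow_dvd_pow (3 : ℤ) hj3).trans hjn)
  exact hj ▸ pow_dvd_pow 3 hj2

lemma three_pow_dvd_pell_y_pow_eighteen {γ : Solution₁ d} {n : ℤ} (hn : ¬ 27 ∣ n) {l : ℕ}
    (h : (3 : ℤ) ^ l ∣ (γ ^ n).x) : (3 : ℤ) ^ l ∣ (γ ^ 18).y := by
  have hdouble : (3 : ℤ) ^ l ∣ (γ ^ (2 * n)).y := by
    rw [mul_comm, zpow_mul, zpow_ofNat, pell_y_sq]
    exact (h.mul_left _).mul_right _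
  have htower : (3 : ℤ) ^ l ∣ (γ ^ (2 * 3 ^ (l + 1) : ℤ)).y := by
    rw [show (2 * 3 ^ (l + 1) : ℤ) = (6 * 3 ^ l : ℕ) by push_cast; ring, zpow_natCast]
    exact (pow_dvd_pow _ l.le_succ).trans (three_pow_dvd_pell_y_pow γ l)
  have hgcd := dvd_pell_y_zpow_gcd hdouble htower
  rw [Int.gcd_mul_left, zpow_natCast] at hgcd
  obtain ⟨t, ht⟩ : Int.natAbs 2 * Int.gcd n (3 ^ (l + 1)) ∣ 18 :=
    mul_dvd_mul_left 2 (gcd_three_pow_dvd_nine hn _)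
  rw [ht, pow_mul]
  exact dvd_pell_y_pow hgcd t

lemma twentySeven_mul_le_of_pell (hd : 0 ≤ d) {γ : Solution₁ d} {m l : ℕ} (hlm : l ≤ m)
    (hx : |(γ ^ 27).x| = 3 ^ m + 3 ^ l) : 27 * l ≤ m + 82 := by
  rcases lt_or_ge l 3 with hl | hl
  · omega
  obtain ⟨j, rfl⟩ := Nat.exists_eq_add_of_le' hl
  have hdvd : (3 : ℤ) ^ (j + 3) ∣ (γ ^ 3 ^ 3).x := by
    rw [← dvd_abs, show 3 ^ 3 = 27 by norm_num, hx]
    exact dvd_add (pow_dvd_pow _ hlm) dvd_rfl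
  have hjx : (3 : ℤ) ^ j ≤ |γ.x| :=
    Int.le_of_dvd (abs_pos.mpr (Solution₁.x_ne_zero hd γ))
      ((dvd_abs _ _).mpr (three_pow_dvd_pell_x_of_pow hdvd))
  have hpow : (3 : ℤ) ^ (j * 27) ≤ 3 ^ (m + 1) := by
    calc (3 : ℤ) ^ (j * 27) = (3 ^ j) ^ 3 ^ 3 := by rw [pow_mul]; norm_num
      _ ≤ |γ.x| ^ 3 ^ 3 := by gcongr
      _ ≤ |(γ ^ 3 ^ 3).x| := abs_pell_x_pow_le hd γ 3
      _ = 3 ^ m + 3 ^ (j + 3) := hx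
      _ ≤ 3 ^ m + 3 ^ m := by gcongr; norm_num
      _ ≤ 3 ^ (m + 1) := by rw [pow_succ]; linarith [pow_pos (three_pos (α := ℤ)) m]
  have hexp := (pow_le_pow_iff_right₀ (by norm_num : (1 : ℤ) < 3)).mp hpow
  omega

lemma not_isSquare_of_pell {d u z : ℕ} (hu : 1 < u) (h : u ^ 2 = d * z ^ 2 + 1) :
    ¬ IsSquare (d : ℤ) := by
  rintro ⟨r, hr⟩
  have h' : (u : ℤ) ^ 2 = d * z ^ 2 + 1 := by exact_mod_cast h
  rw [hr] at h'
  have hfactor : (u - r * z) * (u + r * z) = 1 := by linear_combination h'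
  rcases Int.mul_eq_one_iff_eq_one_or_neg_one.mp hfactor with ⟨h1, h2⟩ | ⟨h1, h2⟩ <;> omega

theorem exists_bound_of_pell (d : ℕ) : ∃ c : ℕ, ∀ m l z : ℕ, l ≤ m →
    (3 ^ m + 3 ^ l) ^ 2 = d * z ^ 2 + 1 → l ≤ c ∨ 27 * l ≤ m + 82 := by
  have hU (m l : ℕ) : 1 < 3 ^ m + 3 ^ l := by
    linarith [Nat.one_le_pow m 3 three_pos, Nat.one_le_pow l 3 three_pos]
  by_cases hsq : IsSquare (d : ℤ)
  · exact ⟨0, fun m l z _ h => absurd hsq (not_isSquare_of_pell (hU m l) h)⟩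
  have hd : (0 : ℤ) < d := by
    have hd0 : d ≠ 0 := by
      rintro rfl
      exact hsq (by simp)
    exact_mod_cast Nat.pos_of_ne_zero hd0
  obtain ⟨a, ha⟩ := IsFundamental.exists_of_not_isSquare hd hsq
  refine ⟨(a ^ 18).y.natAbs, fun m l z hlm h => ?_⟩
  have hpell : ((3 : ℤ) ^ m + 3 ^ l) ^ 2 - d * z ^ 2 = 1 := by
    rw [sub_eq_iff_eq_add']
    exact_mod_cast h
  obtain ⟨n, hn⟩ := ha.eq_zpow_or_neg_zpow (Solution₁.mk _ _ hpell)
  have hx : |(a ^ n).x| = 3 ^ m + 3 ^ l := by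
    rw [← abs_of_pos (by positivity : (0 : ℤ) < 3 ^ m + 3 ^ l), ← Solution₁.x_mk _ _ hpell]
    rcases hn with hn | hn <;> simp [hn]
  by_cases h27 : 27 ∣ n
  · right
    obtain ⟨k, rfl⟩ := h27
    rw [mul_comm, zpow_mul, zpow_ofNat] at hx
    exact twentySeven_mul_le_of_pell hd.le hlm hx
  · left
    have hdvd : (3 : ℤ) ^ l ∣ (a ^ n).x := by
      rw [← dvd_abs, hx]
      exact dvd_add (pow_dvd_pow _ hlm) dvd_rfl
    have hy0 : (a ^ 18).y ≠ 0 := by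
      simpa using (ha.y_strictMono (by norm_num : (0 : ℤ) < 18)).ne'
    have hle := Nat.le_of_dvd (Int.natAbs_pos.mpr hy0)
      (Int.natAbs_dvd_natAbs.mpr (three_pow_dvd_pell_y_pow_eighteen h27 hdvd))
    rw [Int.natAbs_pow] at hle
    exact (Nat.lt_pow_self (by norm_num : 1 < 3)).le.trans hle

end Pell

section Eisenstein

open NumberField IsCyclotomicExtension.Rat.Three

variable {K : Type*} [Field K] {ζ : K} (hζ : IsPrimitiveRoot ζ 3)

lemma toInteger_sq_add_toInteger_add_one : hζ.toInteger ^ 2 + hζ.toInteger + 1 = 0 :=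
  eta_sq_add_eta_add_one hζ

lemma int_add_int_mul_toInteger_cube (p q : ℤ) : ((p : 𝓞 K) + q * hζ.toInteger) ^ 3 =
    (p ^ 3 + q ^ 3 - 3 * p * q ^ 2 : ℤ) + (3 * p * q * (p - q) : ℤ) * hζ.toInteger := by
  push_cast
  linear_combination (3 * p * q ^ 2 + q ^ 3 * hζ.toInteger - q ^ 3 : 𝓞 K) *
    toInteger_sq_add_toInteger_add_one hζ

variable [NumberField K] [IsCyclotomicExtension {3} ℚ K]

lemma exists_int_add_int_mul_toInteger (x : 𝓞 K) : ∃ p q : ℤ, x = p + q * hζ.toInteger := by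
  have hdim : hζ.integralPowerBasis.dim = 2 := by
    rw [IsPrimitiveRoot.integralPowerBasis_dim]
    decide
  let b := hζ.integralPowerBasis.basis.reindex (finCongr hdim)
  refine ⟨b.repr x 0, b.repr x 1, (b.sum_repr x).symm.trans ?_⟩
  simp [b, Fin.sum_univ_two]

lemma int_add_int_mul_toInteger_inj {p q p' q' : ℤ}
    (h : (p : 𝓞 K) + q * hζ.toInteger = p' + q' * hζ.toInteger) : p = p' ∧ q = q' := by
  have hdim : hζ.integralPowerBasis.dim = 2 := by
    rw [IsPrimitiveRoot.integralPowerBasis_dim]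
    decide
  let b := hζ.integralPowerBasis.basis.reindex (finCongr hdim)
  have hlin := Fintype.linearIndependent_iff.mp b.linearIndependent ![p - p', q - q'] (by
    simp [b, Fin.sum_univ_two]
    linear_combination h)
  exact ⟨by simpa [sub_eq_zero] using hlin 0, by simpa [sub_eq_zero] using hlin 1⟩

lemma three_dvd_of_three_dvd_intCast {n : ℤ} (h : (3 : 𝓞 K) ∣ n) : 3 ∣ n := by
  obtain ⟨x, hx⟩ := h
  obtain ⟨p, q, rfl⟩ := exists_int_add_int_mul_toInteger
    (IsCyclotomicExtension.zeta_spec 3 ℚ K) x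
  refine ⟨p, (int_add_int_mul_toInteger_inj (IsCyclotomicExtension.zeta_spec 3 ℚ K)
    (q := 0) (q' := 3 * q) ?_).1⟩
  push_cast
  linear_combination hx

-- Modulo `3` every cube is an integer, so Kummer's lemma leaves only the units `±1`.
lemma unit_eq_one_or_neg_one_of_three_dvd {u : (𝓞 K)ˣ} {x : 𝓞 K} {n : ℤ} (hn : ¬ 3 ∣ n)
    (h : 3 ∣ x ^ 3 * u - n) : u = 1 ∨ u = -1 := by
  have hζ := IsCyclotomicExtension.zeta_spec 3 ℚ K
  obtain ⟨p, q, rfl⟩ := exists_int_add_int_mul_toInteger hζ x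
  set c : ℤ := p ^ 3 + q ^ 3 with hc
  have hcu : (3 : 𝓞 K) ∣ c * u - n := by
    obtain ⟨t, ht⟩ := h
    rw [int_add_int_mul_toInteger_cube] at ht
    refine ⟨t + (p * q ^ 2 - p * q * (p - q) * hζ.toInteger) * u, ?_⟩
    push_cast [hc] at ht ⊢
    linear_combination ht
  have hc3 : ¬ 3 ∣ c := by
    rintro ⟨k, hk⟩
    refine hn (three_dvd_of_three_dvd_intCast (K := K) ?_)
    rw [hk] at hcu
    push_cast at hcu
    exact (dvd_sub_right ((dvd_mul_right _ _).mul_right _)).mp hcu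
  obtain ⟨s, t, hst⟩ := (Int.prime_three.coprime_iff_not_dvd).mpr hc3
  obtain ⟨y, hy⟩ := hcu
  refine eq_one_or_neg_one_of_unit_of_congruent hζ u
    ⟨t * n, -hζ.toInteger ^ 2 * (s * u + t * y), ?_⟩
  have hst' : (s * 3 + t * c : 𝓞 K) = 1 := by exact_mod_cast hst
  push_cast
  linear_combination (-u : 𝓞 K) * hst' + t * hy + (s * u + t * y) *
    (hζ.toInteger ^ 2 - 3 * hζ.toInteger + 3) * toInteger_sq_add_toInteger_add_one hζ

lemma isCoprime_of_isCoprime_mul_sq_sub {R : Type*} [CommRing R] {x y : R}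
    (h : IsCoprime (x * y) ((x - y) ^ 2)) : IsCoprime x y := by
  obtain ⟨u, v, huv⟩ := h
  exact ⟨u * y + v * x - 2 * v * y, v * y, by linear_combination huv⟩

-- `A ^ 2 - 3 * A * R + 3 * R ^ 2` is the norm of `(A - R) + R * ζ`.
lemma exists_cube_eq_of_norm_eq_cube {A R s : ℤ} (hR : 3 ∣ R) (hA : ¬ 3 ∣ A)
    (hcop : IsCoprime (A ^ 2 - 3 * A * R + 3 * R ^ 2) (3 * R ^ 2))
    (h : A ^ 2 - 3 * A * R + 3 * R ^ 2 = s ^ 3) :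
    ∃ β : 𝓞 K, β ^ 3 = (A - R : ℤ) + R * hζ.toInteger := by
  have hw := toInteger_sq_add_toInteger_add_one hζ
  generalize hζ.toInteger = w at hw ⊢
  have := IsCyclotomicExtension.Rat.three_pid K
  have hprod : ((A - R : ℤ) + R * w) * (A - (1 - w ^ 2) * R) =
      ((A ^ 2 - 3 * A * R + 3 * R ^ 2 : ℤ) : 𝓞 K) := by
    push_cast
    linear_combination (A * R + (w - 2) * R ^ 2 : 𝓞 K) * hw
  have hcoprime : IsCoprime ((A - R : ℤ) + R * w : 𝓞 K) (A - (1 - w ^ 2) * R) := by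
    refine isCoprime_of_isCoprime_mul_sq_sub ?_
    rw [hprod]
    convert hcop.intCast.neg_right using 1
    push_cast
    linear_combination (w ^ 2 - 3 * w + 3) * R ^ 2 * hw
  obtain ⟨α, u, hα⟩ := exists_associated_pow_of_mul_eq_pow' (c := (s : 𝓞 K)) hcoprime
    (by rw [hprod, h, Int.cast_pow])
  have hu : u = 1 ∨ u = -1 := by
    refine unit_eq_one_or_neg_one_of_three_dvd hA (x := α) ?_
    obtain ⟨t, rfl⟩ := hR
    exact ⟨t * (w - 1), by rw [hα]; push_cast; ring⟩
  rcases hu with rfl | rfl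
  exacts [⟨α, by simpa using hα⟩, ⟨-α, by simpa [Odd.neg_pow (by decide : Odd 3)] using hα⟩]

lemma exists_eq_of_norm_eq_cube {A R s : ℤ} (hR : 3 ∣ R) (hA : ¬ 3 ∣ A)
    (hcop : IsCoprime (A ^ 2 - 3 * A * R + 3 * R ^ 2) (3 * R ^ 2))
    (h : A ^ 2 - 3 * A * R + 3 * R ^ 2 = s ^ 3) :
    ∃ p q : ℤ, A - R = p ^ 3 + q ^ 3 - 3 * p * q ^ 2 ∧ R = 3 * p * q * (p - q) := by
  have : IsCyclotomicExtension {3} ℚ (CyclotomicField 3 ℚ) :=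
    CyclotomicField.isCyclotomicExtension 3 ℚ
  have hζ := IsCyclotomicExtension.zeta_spec 3 ℚ (CyclotomicField 3 ℚ)
  obtain ⟨β, hβ⟩ := exists_cube_eq_of_norm_eq_cube hζ hR hA hcop h
  obtain ⟨p, q, rfl⟩ := exists_int_add_int_mul_toInteger hζ β
  rw [int_add_int_mul_toInteger_cube] at hβ
  obtain ⟨hp, hq⟩ := int_add_int_mul_toInteger_inj hζ hβ
  exact ⟨p, q, hp.symm, hq.symm⟩

end Eisenstein

lemma isCoprime_three_of_not_dvd {x : ℤ} (h : ¬ 3 ∣ x) : IsCoprime x 3 :=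
  (Int.prime_three.coprime_iff_not_dvd.mpr h).symm

lemma cube_injective : Function.Injective fun x : ℤ => x ^ 3 :=
  (Odd.strictMono_pow (by decide : Odd 3)).injective

lemma three_dvd_add_of_three_dvd_cube_add {x y : ℤ} (h : 3 ∣ x ^ 3 + y ^ 3) : 3 ∣ x + y := by
  refine Int.prime_three.dvd_of_dvd_pow (n := 3) ?_
  rw [show (x + y) ^ 3 = (x ^ 3 + y ^ 3) + 3 * (x * y * (x + y)) by ring]
  exact dvd_add h (dvd_mul_right _ _)

lemma not_three_dvd_of_isCoprime {x y : ℤ} (hcop : IsCoprime x y) (h : 3 ∣ x + y) : ¬ 3 ∣ x := by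
  intro hx
  exact Int.prime_three.not_isUnit (hcop.isUnit_of_dvd' hx ((dvd_add_right hx).mp h))

/-- A primitive integer solution of `x³ + y³ = 3ᵏ z³`. -/
structure IsPrimitiveCubeSum (k : ℕ) (x y z : ℤ) : Prop where
  cube_add_cube : x ^ 3 + y ^ 3 = 3 ^ k * z ^ 3
  isCoprime : IsCoprime x y

namespace IsPrimitiveCubeSum

variable {k : ℕ} {x y z : ℤ}

lemma symm (h : IsPrimitiveCubeSum k x y z) : IsPrimitiveCubeSum k y x z :=
  ⟨by rw [add_comm, h.cube_add_cube], h.isCoprime.symm⟩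

lemma three_dvd_add (h : IsPrimitiveCubeSum k x y z) (hk : k ≠ 0) : 3 ∣ x + y := by
  refine three_dvd_add_of_three_dvd_cube_add ?_
  rw [h.cube_add_cube]
  exact (dvd_pow_self 3 hk).mul_right _

lemma isCoprime_three (h : IsPrimitiveCubeSum k x y z) (hk : k ≠ 0) : IsCoprime x 3 :=
  isCoprime_three_of_not_dvd (not_three_dvd_of_isCoprime h.isCoprime (h.three_dvd_add hk))

lemma exists_of_mul_eq_of_three_dvd {u v w t : ℤ} (hsum : u + v + w = 0)
    (hprod : u * v * w = 3 ^ k * t ^ 3) (hcop : IsCoprime u v) (hw : 3 ∣ w) :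
    ∃ x y z : ℤ, IsPrimitiveCubeSum k x y z ∧ x * y * z = -t ∧ u = x ^ 3 ∧ v = y ^ 3 := by
  have huv : 3 ∣ u + v := by omega
  have hcop3 : IsCoprime (u * v) 3 :=
    (isCoprime_three_of_not_dvd (not_three_dvd_of_isCoprime hcop huv)).mul_left
      (isCoprime_three_of_not_dvd (not_three_dvd_of_isCoprime hcop.symm (add_comm u v ▸ huv)))
  obtain ⟨w', rfl⟩ : 3 ^ k ∣ w := hcop3.symm.pow_left.dvd_of_dvd_mul_left ⟨t ^ 3, hprod⟩
  have hprod' : u * v * w' = t ^ 3 :=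
    mul_left_cancel₀ (pow_ne_zero k three_ne_zero) (by rw [← hprod]; ring)
  have huw : IsCoprime u w' := by
    have huw := hcop.neg_right.add_mul_left_right (-1)
    rw [show -v + u * -1 = 3 ^ k * w' by linear_combination -hsum] at huw
    exact huw.of_mul_right_right
  have hvw : IsCoprime v w' := by
    have hvw := hcop.symm.neg_right.add_mul_left_right (-1)
    rw [show -u + v * -1 = 3 ^ k * w' by linear_combination -hsum] at hvw
    exact hvw.of_mul_right_right
  have hodd : Odd 3 := by decide
  obtain ⟨x, rfl⟩ := Int.eq_pow_of_mul_eq_pow_odd_left (hcop.mul_right huw) hodd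
    (by rw [← hprod', mul_assoc])
  obtain ⟨y, rfl⟩ := Int.eq_pow_of_mul_eq_pow_odd_left (hcop.symm.mul_right hvw) hodd
    (by rw [← hprod']; ring)
  obtain ⟨z, rfl⟩ := Int.eq_pow_of_mul_eq_pow_odd_left (huw.mul_left hvw).symm hodd
    (by rw [← hprod']; ring)
  refine ⟨x, y, -z, ⟨by linear_combination hsum, ?_⟩, cube_injective ?_, rfl, rfl⟩
  · exact (IsCoprime.pow_iff three_pos three_pos).mp hcop
  · linear_combination -hprod'

lemma exists_of_mul_eq {u v w t : ℤ} (hk : k ≠ 0) (hsum : u + v + w = 0)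
    (hprod : u * v * w = 3 ^ k * t ^ 3) (hcop : IsCoprime u v) :
    ∃ x y z : ℤ, IsPrimitiveCubeSum k x y z ∧ x * y * z = -t ∧
      u ^ 2 + u * v + v ^ 2 = x ^ 6 + x ^ 3 * y ^ 3 + y ^ 6 := by
  obtain rfl : w = -u - v := by linarith
  have hdvd : 3 ∣ u * v * (-u - v) := hprod ▸ (dvd_pow_self 3 hk).mul_right _
  rcases Int.prime_three.dvd_or_dvd hdvd with huv | hw
  · rcases Int.prime_three.dvd_or_dvd huv with hu | hv
    · have hcop' : IsCoprime v (-u - v) := by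
        simpa [sub_eq_add_neg] using hcop.symm.neg_right.add_mul_left_right (-1)
      obtain ⟨x, y, z, hxyz, ht, rfl, hy⟩ := exists_of_mul_eq_of_three_dvd (k := k) (t := t)
        (by ring) (by linear_combination hprod) hcop' hu
      obtain rfl : u = -x ^ 3 - y ^ 3 := by linarith
      exact ⟨x, y, z, hxyz, ht, by ring⟩
    · have hcop' : IsCoprime u (-u - v) := by
        simpa [sub_eq_neg_add] using hcop.neg_right.add_mul_left_right (-1)
      obtain ⟨x, y, z, hxyz, ht, rfl, hy⟩ := exists_of_mul_eq_of_three_dvd (k := k) (t := t)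
        (by ring) (by linear_combination hprod) hcop' hv
      obtain rfl : v = -x ^ 3 - y ^ 3 := by linarith
      exact ⟨x, y, z, hxyz, ht, by ring⟩
  · obtain ⟨x, y, z, hxyz, ht, rfl, rfl⟩ := exists_of_mul_eq_of_three_dvd hsum hprod hcop hw
    exact ⟨x, y, z, hxyz, ht, by ring⟩

lemma exists_cube_factors {A R C : ℤ} (h : IsPrimitiveCubeSum k A (3 * R - A) C) (hk : k ≠ 0)
    (hC : 3 ∣ C) : ∃ s r : ℤ, A ^ 2 - 3 * A * R + 3 * R ^ 2 = s ^ 3 ∧ R = 3 ^ (k + 1) * r ^ 3 ∧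
      C = 3 * (r * s) ∧ IsCoprime (A ^ 2 - 3 * A * R + 3 * R ^ 2) (3 * R ^ 2) := by
  obtain ⟨C', rfl⟩ := hC
  have hA3 : IsCoprime A 3 := h.isCoprime_three hk
  have hAR : IsCoprime A R := by
    have hAR := h.isCoprime.add_mul_left_right 1
    rw [show 3 * R - A + A * 1 = 3 * R by ring] at hAR
    exact hAR.of_mul_right_right
  have hS3 : IsCoprime (A ^ 2 - 3 * A * R + 3 * R ^ 2) 3 := by
    rw [show A ^ 2 - 3 * A * R + 3 * R ^ 2 = A ^ 2 + 3 * (R ^ 2 - A * R) by ring]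
    exact hA3.pow_left.add_mul_left_left _
  have hSR : IsCoprime (A ^ 2 - 3 * A * R + 3 * R ^ 2) R := by
    rw [show A ^ 2 - 3 * A * R + 3 * R ^ 2 = A ^ 2 + R * (3 * R - 3 * A) by ring]
    exact hAR.pow_left.add_mul_left_left _
  have hcop := hS3.mul_right (hSR.pow_right (n := 2))
  have hprod : R * (A ^ 2 - 3 * A * R + 3 * R ^ 2) = 3 ^ (k + 1) * C' ^ 3 := by
    have h9 := h.cube_add_cube
    exact mul_left_cancel₀ (by norm_num : (9 : ℤ) ≠ 0) (by rw [pow_succ]; linear_combination h9)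
  generalize A ^ 2 - 3 * A * R + 3 * R ^ 2 = S at *
  obtain ⟨R', rfl⟩ : 3 ^ (k + 1) ∣ R := hS3.symm.pow_left.dvd_of_dvd_mul_right ⟨C' ^ 3, hprod⟩
  have hprod' : R' * S = C' ^ 3 :=
    mul_left_cancel₀ (pow_ne_zero (k + 1) three_ne_zero) (by rw [← hprod, mul_assoc])
  have hR'S : IsCoprime R' S := hSR.symm.of_mul_left_right
  obtain ⟨s, rfl⟩ := Int.eq_pow_of_mul_eq_pow_odd_right hR'S (by decide) hprod'
  obtain ⟨r, rfl⟩ := Int.eq_pow_of_mul_eq_pow_odd_left hR'S (by decide) hprod'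
  have hC' : C' = r * s := cube_injective (by simp only [← hprod', mul_pow])
  exact ⟨s, r, rfl, rfl, by rw [hC'], hcop⟩

lemma exists_descent (h : IsPrimitiveCubeSum k x y z) (hk : k ≠ 0) (hz : 3 ∣ z) :
    ∃ x' y' z' : ℤ, IsPrimitiveCubeSum k x' y' z' ∧
      z = 3 * (x' * y' * z') * (x' ^ 6 + x' ^ 3 * y' ^ 3 + y' ^ 6) := by
  obtain ⟨R, hR⟩ := h.three_dvd_add hk
  obtain rfl : y = 3 * R - x := by linarith
  obtain ⟨s, r, hs, hr, rfl, hcop⟩ := h.exists_cube_factors hk hz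
  have hx : ¬ 3 ∣ x := not_three_dvd_of_isCoprime h.isCoprime (h.three_dvd_add hk)
  have hR3 : 3 ∣ R := hr ▸ (dvd_pow_self 3 k.succ_ne_zero).mul_right _
  obtain ⟨p, q, hp, hq⟩ := exists_eq_of_norm_eq_cube hR3 hx hcop hs
  obtain rfl : x = R + (p ^ 3 + q ^ 3 - 3 * p * q ^ 2) := by linarith
  have hpq : IsCoprime p q := by
    obtain ⟨a, b, hab⟩ := h.isCoprime
    refine ⟨(a - b) * p ^ 2,
      (a - b) * (q ^ 2 - 3 * p * q) + (a + 2 * b) * (3 * p * (p - q)), ?_⟩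
    linear_combination hab - (a + 2 * b) * hq
  have hs' : s = p ^ 2 - p * q + q ^ 2 := cube_injective (by
    simp only [← hs]
    rw [hq]
    ring)
  have hprod : -p * q * (p - q) = 3 ^ k * (-r) ^ 3 :=
    mul_left_cancel₀ (three_ne_zero' ℤ) (by rw [pow_succ] at hr; linear_combination hq - hr)
  obtain ⟨x', y', z', h', ht, hnorm⟩ := exists_of_mul_eq hk (by ring) hprod hpq.neg_left
  exact ⟨x', y', z', h', by rw [← hnorm, ht, hs']; ring⟩

lemma three_pow_dvd_of_descent {i : ℕ} (h : IsPrimitiveCubeSum k x y z) (hk : k ≠ 0)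
    (hdvd : 3 ^ (i + 1) ∣ 3 * (x * y * z) * (x ^ 6 + x ^ 3 * y ^ 3 + y ^ 6)) : 3 ^ i ∣ z := by
  have hx := h.isCoprime_three hk
  have hy := h.symm.isCoprime_three hk
  obtain ⟨t, ht⟩ := h.three_dvd_add hk
  have hnorm : IsCoprime (x ^ 6 + x ^ 3 * y ^ 3 + y ^ 6) 3 := by
    have hcop : IsCoprime (-(x ^ 3 * y ^ 3)) 3 := (hx.pow_left.mul_left hy.pow_left).neg_left
    rw [show x ^ 6 + x ^ 3 * y ^ 3 + y ^ 6 =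
        -(x ^ 3 * y ^ 3) + 3 * (t * (x ^ 2 - x * y + y ^ 2) * (x ^ 3 + y ^ 3)) by
      linear_combination ((x ^ 2 - x * y + y ^ 2) * (x ^ 3 + y ^ 3)) * ht]
    exact hcop.add_mul_left_left _
  rw [pow_succ', mul_assoc] at hdvd
  have hdvd' := Int.dvd_of_mul_dvd_mul_left three_ne_zero hdvd
  rw [mul_right_comm] at hdvd'
  exact ((hx.mul_left hy).mul_left hnorm).pow_right.symm.dvd_of_dvd_mul_left hdvd'

lemma abs_pow_seven_le_of_descent (h : IsPrimitiveCubeSum k x y z) (hx : x ≠ 0) (hy : y ≠ 0) :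
    9 * ((3 ^ k) ^ 2 * |z| ^ 7) ≤
      4 * |3 * (x * y * z) * (x ^ 6 + x ^ 3 * y ^ 3 + y ^ 6)| := by
  have hnorm : 3 * ((3 ^ k) ^ 2 * |z| ^ 6) ≤ 4 * (x ^ 6 + x ^ 3 * y ^ 3 + y ^ 6) := by
    have hsq : (3 ^ k) ^ 2 * |z| ^ 6 = (x ^ 3 + y ^ 3) ^ 2 := by
      rw [h.cube_add_cube, (by decide : Even 6).pow_abs]
      ring
    rw [hsq]
    linear_combination sq_nonneg (x ^ 3 - y ^ 3)
  have hpos : 0 ≤ x ^ 6 + x ^ 3 * y ^ 3 + y ^ 6 :=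
    nonneg_of_mul_nonneg_right (le_trans (by positivity) hnorm) four_pos
  have hxy : 1 ≤ |x * y| := Int.one_le_abs (mul_ne_zero hx hy)
  rw [abs_mul, abs_mul, abs_mul, abs_of_nonneg hpos,
    abs_of_pos (three_pos (α := ℤ))]
  generalize x ^ 6 + x ^ 3 * y ^ 3 + y ^ 6 = N at *
  calc 9 * ((3 ^ k) ^ 2 * |z| ^ 7) = 3 * (3 * ((3 ^ k) ^ 2 * |z| ^ 6)) * |z| := by ring
    _ ≤ 3 * (4 * N) * |z| := by gcongr
    _ = 12 * N * |z| * 1 := by ring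
    _ ≤ 12 * N * |z| * |x * y| := by gcongr
    _ = _ := by ring

lemma exists_descent_bounds {i : ℕ} (h : IsPrimitiveCubeSum k x y z) (hk : k ≠ 0)
    (hz : 3 ^ (i + 1) ∣ z) (hz0 : z ≠ 0) : ∃ x' y' z' : ℤ, IsPrimitiveCubeSum k x' y' z' ∧
      z' ≠ 0 ∧ 3 ^ i ∣ z' ∧ 9 * ((3 ^ k) ^ 2 * |z'| ^ 7) ≤ 4 * |z| := by
  obtain ⟨x', y', z', h', rfl⟩ := h.exists_descent hk ((dvd_pow_self 3 i.succ_ne_zero).trans hz)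
  simp only [ne_eq, mul_eq_zero, not_or] at hz0
  obtain ⟨⟨-, ⟨hx', hy'⟩, hz'⟩, -⟩ := hz0
  exact ⟨x', y', z', h', hz', h'.three_pow_dvd_of_descent hk hz,
    h'.abs_pow_seven_le_of_descent hx' hy'⟩

lemma three_dvd_of_cube_add_cube_eq_three_mul (h : IsPrimitiveCubeSum 1 x y z) : 3 ∣ z := by
  obtain ⟨t, ht⟩ := h.three_dvd_add one_ne_zero
  refine Int.prime_three.dvd_of_dvd_pow (n := 3) ⟨3 * t ^ 3 - x * y * t, ?_⟩
  have heq := h.cube_add_cube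
  obtain rfl : y = 3 * t - x := by linarith
  exact mul_left_cancel₀ (three_ne_zero' ℤ) (by linear_combination -heq)

theorem eq_zero_of_one (h : IsPrimitiveCubeSum 1 x y z) : z = 0 := by
  induction hn : z.natAbs using Nat.strong_induction_on generalizing x y z with
  | _ n ih =>
    by_contra hz0
    obtain ⟨x', y', z', h', hz', -, hle⟩ := h.exists_descent_bounds one_ne_zero (i := 0)
      (by simpa using h.three_dvd_of_cube_add_cube_eq_three_mul) hz0
    have hpow : |z'| ≤ |z'| ^ 7 := le_self_pow₀ (Int.one_le_abs hz') (by norm_num)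
    have hpos : 0 < |z'| := abs_pos.mpr hz'
    have hlt : z'.natAbs < n := by
      zify [← hn]
      linarith
    exact hz' (ih _ hlt h' rfl)

theorem two_pow_le_abs {i : ℕ} (h : IsPrimitiveCubeSum 2 x y z) (hz : 3 ^ i ∣ z) (hz0 : z ≠ 0) :
    2 ^ (7 ^ i - 1) ≤ |z| := by
  induction i generalizing x y z with
  | zero => simpa using Int.one_le_abs hz0
  | succ i ih =>
    obtain ⟨x', y', z', h', hz', hdvd, hle⟩ := h.exists_descent_bounds two_ne_zero hz hz0
    have hexp : 7 ^ (i + 1) - 1 = (7 ^ i - 1) * 7 + 6 := by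
      have hpos : 1 ≤ 7 ^ i := Nat.one_le_pow _ _ (by norm_num)
      omega
    calc (2 : ℤ) ^ (7 ^ (i + 1) - 1) = (2 ^ (7 ^ i - 1)) ^ 7 * 2 ^ 6 := by
          rw [hexp, pow_add, pow_mul]
      _ ≤ |z'| ^ 7 * 2 ^ 6 := by gcongr; exact ih h' hdvd hz'
      _ ≤ |z| := by linarith [pow_nonneg (abs_nonneg z') 7]

end IsPrimitiveCubeSum

lemma nine_pow_le_two_pow {j : ℕ} (hj : 2 ≤ j) :
    9 ^ ((3 * j + 1) * 30) ≤ 2 ^ (7 ^ (2 * j) - 1) := by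
  have hexp : 120 * (3 * j + 1) + 1 ≤ 49 ^ j := by
    induction j, hj using Nat.le_induction with
    | base => norm_num
    | succ n hn ih =>
      rw [pow_succ]
      omega
  have h49 : 7 ^ (2 * j) = 49 ^ j := pow_mul 7 2 j
  calc 9 ^ ((3 * j + 1) * 30) ≤ (2 ^ 4) ^ ((3 * j + 1) * 30) := by gcongr; norm_num
    _ = 2 ^ (4 * ((3 * j + 1) * 30)) := (pow_mul _ _ _).symm
    _ ≤ 2 ^ (7 ^ (2 * j) - 1) := Nat.pow_le_pow_right two_pos (by omega)

-- Divisibility of `q` by `9 ^ j` makes `q` doubly exponential in `j`, so that for `j ≥ 2` the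
-- singly exponential bound on `A` makes `P / q` a near miss.
lemma exists_bound_of_isPrimitiveCubeSum_two : ∃ W : ℕ, ∀ j A q P : ℕ, 0 < A → 0 < q →
    IsPrimitiveCubeSum 2 P (-A) q → 9 ^ j ∣ q → A < 9 ^ (3 * j + 1) → q ≤ W := by
  obtain ⟨B, hB⟩ := IsCubicNearMiss.exists_bound
  refine ⟨max B (9 ^ 120), fun j A q P hA hq h hdvd hlt => ?_⟩
  by_cases hnear : A ^ 30 ≤ q
  · have hcube : P ^ 3 = 9 * q ^ 3 + A ^ 3 := by
      zify
      linear_combination h.cube_add_cube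
    exact (hB q A P ⟨hA, hcube, hnear⟩).trans (le_max_left _ _)
  · have hqlt : q < 9 ^ ((3 * j + 1) * 30) := by
      rw [pow_mul]
      exact (not_le.mp hnear).trans (Nat.pow_lt_pow_left hlt (by norm_num))
    have hgrowth : 2 ^ (7 ^ (2 * j) - 1) ≤ q := by
      have hgrowth := h.two_pow_le_abs (i := 2 * j)
        (by rw [pow_mul]; exact_mod_cast hdvd) (by exact_mod_cast hq.ne')
      rw [Nat.abs_cast] at hgrowth
      exact_mod_cast hgrowth
    have hj : j ≤ 1 := by
      by_contra! hj
      exact (hgrowth.trans_lt hqlt).not_ge (nine_pow_le_two_pow hj)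
    exact (hqlt.le.trans (Nat.pow_le_pow_right (by norm_num) (by omega))).trans (le_max_right _ _)

lemma le_add_three_mul_of_cube_eq {P a q : ℕ} (h : P ^ 3 = a ^ 3 + 9 * q ^ 3) :
    P ≤ a + 3 * q := by
  refine (Nat.pow_le_pow_iff_left three_ne_zero).mp ?_
  rw [h, show (a + 3 * q) ^ 3 =
    a ^ 3 + 9 * q ^ 3 + (18 * q ^ 3 + 9 * a ^ 2 * q + 27 * a * q ^ 2) by ring]
  exact Nat.le_add_right _ _

/-- A common zero of the two diagonal forms `X a + Y b + c` and `X a³ + Y b³ + c³`. -/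
structure IsDiagonalZero {R : Type*} [CommRing R] (X Y a b c : R) : Prop where
  linear : X * a + Y * b + c = 0
  cubic : X * a ^ 3 + Y * b ^ 3 + c ^ 3 = 0

/-- What remains of an integral zero of the forms with weights `3 ^ (l + 3 * κ)`, `3 ^ l` and `1`
after the powers of `3` and the common factors are removed from its coordinates. -/
structure IsReducedZero (κ l : ℕ) (a b c : ℤ) : Prop where
  linear : 9 ^ κ * a + b + c = 0
  cubic : a ^ 3 + b ^ 3 + 9 ^ l * c ^ 3 = 0
  isCoprime : IsCoprime a b

namespace IsReducedZero

variable {κ l : ℕ} {a b c : ℤ}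

lemma neg (h : IsReducedZero κ l a b c) : IsReducedZero κ l (-a) (-b) (-c) :=
  ⟨by linear_combination -h.linear, by linear_combination -h.cubic, h.isCoprime.neg_neg⟩

lemma c_pos (h : IsReducedZero κ l a b c) (hκ : κ ≠ 0) (hl : l ≠ 0) (ha : 0 < a) : 0 < c := by
  by_contra! hc
  have cube_le {x y : ℤ} (hxy : x ≤ y) : x ^ 3 ≤ y ^ 3 :=
    (Odd.strictMono_pow (by decide : Odd 3)).monotone hxy
  have hκa : 9 * a ≤ 9 ^ κ * a := by gcongr; exact le_self_pow₀ (by norm_num) hκ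
  have hc3 : c ^ 3 ≤ 0 := by simpa using cube_le hc
  have hlc : 9 ^ l * c ^ 3 ≤ 9 * c ^ 3 :=
    mul_le_mul_of_nonpos_right (le_self_pow₀ (by norm_num) hl) hc3
  have ha3 : 0 < a ^ 3 := by positivity
  obtain rfl : b = -c - 9 ^ κ * a := by linear_combination h.linear
  have hcubic := h.cubic
  rcases le_total (-c) a with hca | hca
  · have hb := cube_le (show -c - 9 ^ κ * a ≤ -(8 * a) by linarith)
    linarith [show (-(8 * a)) ^ 3 = -(512 * a ^ 3) by ring]
  · have hb := cube_le (show -c - 9 ^ κ * a ≤ -c by linarith)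
    have hac := cube_le hca
    linarith [show (-c) ^ 3 = -c ^ 3 by ring]

lemma a_lt (h : IsReducedZero κ l a b c) (hl : l ≠ 0) : a < 9 ^ l := by
  have hdvd : a ∣ (9 ^ l - 1) * c ^ 3 := by
    obtain rfl : b = -c - 9 ^ κ * a := by linear_combination h.linear
    exact ⟨(9 ^ κ) ^ 3 * a ^ 2 + 3 * (9 ^ κ) ^ 2 * a * c + 3 * 9 ^ κ * c ^ 2 - a ^ 2,
      by linear_combination h.cubic⟩
  have hcop : IsCoprime a c := by
    rw [show c = -b + a * -9 ^ κ by linear_combination h.linear]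
    exact h.isCoprime.neg_right.add_mul_left_right _
  have hpos : (1 : ℤ) < 9 ^ l := one_lt_pow₀ (by norm_num) hl
  have hle := Int.le_of_dvd (by linarith) (hcop.pow_right.dvd_of_dvd_mul_right hdvd)
  linarith

lemma exists_l_eq (h : IsReducedZero κ l a b c) (ha : a ≠ 0) (hb : b ≠ 0) (hc : c ≠ 0) :
    ∃ j, l = 3 * j + 1 := by
  obtain ⟨j, hj⟩ : ∃ j, l = 3 * j ∨ l = 3 * j + 1 ∨ l = 3 * j + 2 := ⟨l / 3, by omega⟩
  rcases hj with rfl | rfl | rfl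
  · exact absurd (by linear_combination h.cubic)
      (fermatLastTheoremFor_iff_int.mp fermatLastTheoremThree a (9 ^ j * c) (-b) ha (by positivity)
        (neg_ne_zero.mpr hb))
  · exact ⟨j, rfl⟩
  · have hsum : IsPrimitiveCubeSum 1 (-b) (-a) (3 * 9 ^ j * c) :=
      ⟨by linear_combination -h.cubic, h.isCoprime.symm.neg_neg⟩
    exact absurd hsum.eq_zero_of_one (by positivity)

lemma exists_bound_of_a_pos : ∃ B : ℕ, ∀ κ l : ℕ, κ ≠ 0 → l ≠ 0 → ∀ a b c : ℤ, 0 < a →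
    IsReducedZero κ l a b c → l + κ ≤ B := by
  obtain ⟨W, hW⟩ := exists_bound_of_isPrimitiveCubeSum_two
  refine ⟨3 * W + 1 + (9 ^ (3 * W + 1) + 3 * W), fun κ l hκ hl a b c ha h => ?_⟩
  have hc := h.c_pos hκ hl ha
  have hlinear : -b = 9 ^ κ * a + c := by linear_combination -h.linear
  have hb : 0 < -b := hlinear ▸ by positivity
  obtain ⟨j, rfl⟩ := h.exists_l_eq ha.ne' (neg_pos.mp hb).ne hc.ne'
  have ha_lt := h.a_lt hl
  have hsum : IsPrimitiveCubeSum 2 (-b) (-a) (9 ^ j * c) :=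
    ⟨by linear_combination -h.cubic, h.isCoprime.symm.neg_neg⟩
  lift a to ℕ using ha.le
  lift c to ℕ using hc.le
  lift -b to ℕ using hb.le with P
  norm_cast at ha hc hlinear ha_lt
  have hq : 9 ^ j * c ≤ W := hW j a _ P ha (by positivity) (by exact_mod_cast hsum)
    (dvd_mul_right _ _) ha_lt
  have hj : j ≤ W := calc
    j ≤ 9 ^ j := (Nat.lt_pow_self (by norm_num)).le
    _ ≤ 9 ^ j * c := Nat.le_mul_of_pos_right _ hc
    _ ≤ W := hq
  have ha_le : a ≤ 9 ^ (3 * W + 1) :=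
    ha_lt.le.trans (Nat.pow_le_pow_right (by norm_num) (by omega))
  have hcube : P ^ 3 = a ^ 3 + 9 * (9 ^ j * c) ^ 3 := by
    zify
    linear_combination hsum.cube_add_cube
  have hP : P ≤ 9 ^ (3 * W + 1) + 3 * W :=
    (le_add_three_mul_of_cube_eq hcube).trans (add_le_add ha_le (Nat.mul_le_mul_left 3 hq))
  have hκ_le : κ ≤ P := calc
    κ ≤ 9 ^ κ := (Nat.lt_pow_self (by norm_num)).le
    _ ≤ 9 ^ κ * a := Nat.le_mul_of_pos_right _ ha
    _ ≤ P := hlinear ▸ Nat.le_add_right _ _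
  omega

lemma exists_bound : ∃ B : ℕ, ∀ κ l : ℕ, κ ≠ 0 → l ≠ 0 → ∀ a b c : ℤ, a ≠ 0 →
    IsReducedZero κ l a b c → l + κ ≤ B := by
  obtain ⟨B, hB⟩ := exists_bound_of_a_pos
  refine ⟨B, fun κ l hκ hl a b c ha h => ?_⟩
  rcases ha.lt_or_gt with ha | ha
  · exact hB κ l hκ hl (-a) (-b) (-c) (neg_pos.mpr ha) h.neg
  · exact hB κ l hκ hl a b c ha h

end IsReducedZero

lemma exists_eq_three_pow_mul {x : ℤ} (hx : x ≠ 0) : ∃ (k : ℕ) (y : ℤ), x = 3 ^ k * y ∧ ¬ 3 ∣ y :=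
  ⟨_, (Int.finiteMultiplicity_iff.mpr ⟨by norm_num, hx⟩).exists_eq_pow_mul_and_not_dvd⟩

lemma not_lt_and_lt_of_three_pow_mul_add {p q r : ℕ} {x y z : ℤ} (hx : ¬ 3 ∣ x)
    (h : 3 ^ p * x + 3 ^ q * y + 3 ^ r * z = 0) : ¬ (p < q ∧ p < r) := by
  rintro ⟨hpq, hpr⟩
  obtain ⟨i, rfl⟩ := Nat.exists_eq_add_of_lt hpq
  obtain ⟨j, rfl⟩ := Nat.exists_eq_add_of_lt hpr
  have hsum : x + 3 * (3 ^ i * y) + 3 * (3 ^ j * z) = 0 :=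
    (mul_eq_zero.mp (show 3 ^ p * (x + 3 * (3 ^ i * y) + 3 * (3 ^ j * z)) = 0 by
      linear_combination h)).resolve_left (by positivity)
  exact hx ⟨-(3 ^ i * y) - 3 ^ j * z, by linear_combination hsum⟩

lemma exists_isReducedZero_of_coprime_part {κ l : ℕ} {a b c : ℤ} (ha : a ≠ 0)
    (hlinear : 9 ^ κ * a + b + c = 0) (hcubic : a ^ 3 + b ^ 3 + 9 ^ l * c ^ 3 = 0) :
    ∃ a' b' c' : ℤ, a' ≠ 0 ∧ IsReducedZero κ l a' b' c' := by
  obtain ⟨g, a', b', hg, hgcd, rfl, rfl⟩ := Int.exists_gcd_one' (Int.gcd_pos_of_ne_zero_left b ha)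
  obtain rfl : c = (-9 ^ κ * a' - b') * g := by linear_combination hlinear
  refine ⟨a', b', -9 ^ κ * a' - b', left_ne_zero_of_mul ha, by ring, ?_,
    Int.isCoprime_iff_gcd_eq_one.mpr hgcd⟩
  exact (mul_eq_zero.mp (show (g : ℤ) ^ 3 * _ = 0 by linear_combination hcubic)).resolve_left
    (by positivity)

lemma exists_eq_add_three_mul_of_valuations {m l α β γ : ℕ} {a b c : ℤ} (hl : l ≠ 0)
    (hlm : l < m) (ha : ¬ 3 ∣ a) (hb : ¬ 3 ∣ b) (hc : ¬ 3 ∣ c)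
    (h : IsDiagonalZero (3 ^ m) (3 ^ l) (3 ^ α * a) (3 ^ β * b) (3 ^ γ * c)) :
    ∃ κ, m = l + 3 * κ ∧ β = α + κ ∧ γ = l + α + κ := by
  have hcube {x : ℤ} (hx : ¬ 3 ∣ x) : ¬ 3 ∣ x ^ 3 := mt Int.prime_three.dvd_of_dvd_pow hx
  have hlin_a := not_lt_and_lt_of_three_pow_mul_add (p := m + α) (q := l + β) (r := γ)
    (y := b) (z := c) ha (by linear_combination h.linear)
  have hlin_b := not_lt_and_lt_of_three_pow_mul_add (p := l + β) (q := m + α) (r := γ)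
    (y := a) (z := c) hb (by linear_combination h.linear)
  have hlin_c := not_lt_and_lt_of_three_pow_mul_add (p := γ) (q := m + α) (r := l + β)
    (y := a) (z := b) hc (by linear_combination h.linear)
  have hcub_a := not_lt_and_lt_of_three_pow_mul_add (p := m + 3 * α) (q := l + 3 * β)
    (r := 3 * γ) (y := b ^ 3) (z := c ^ 3) (hcube ha) (by linear_combination h.cubic)
  have hcub_b := not_lt_and_lt_of_three_pow_mul_add (p := l + 3 * β) (q := m + 3 * α)
    (r := 3 * γ) (y := a ^ 3) (z := c ^ 3) (hcube hb) (by linear_combination h.cubic)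
  have hcub_c := not_lt_and_lt_of_three_pow_mul_add (p := 3 * γ) (q := m + 3 * α)
    (r := l + 3 * β) (y := a ^ 3) (z := b ^ 3) (hcube hc) (by linear_combination h.cubic)
  exact ⟨(m - l) / 3, by omega, by omega, by omega⟩

lemma IsDiagonalZero.exists_isReducedZero {m l : ℕ} {a b c : ℤ} (hl : l ≠ 0) (hlm : l < m)
    (ha : a ≠ 0) (hb : b ≠ 0) (hc : c ≠ 0) (h : IsDiagonalZero (3 ^ m) (3 ^ l) a b c) :
    ∃ (κ : ℕ) (a' b' c' : ℤ), m = l + 3 * κ ∧ a' ≠ 0 ∧ IsReducedZero κ l a' b' c' := by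
  obtain ⟨α, a, rfl, ha3⟩ := exists_eq_three_pow_mul ha
  obtain ⟨β, b, rfl, hb3⟩ := exists_eq_three_pow_mul hb
  obtain ⟨γ, c, rfl, hc3⟩ := exists_eq_three_pow_mul hc
  obtain ⟨κ, rfl, rfl, rfl⟩ := exists_eq_add_three_mul_of_valuations hl hlm ha3 hb3 hc3 h
  have nine_pow (n : ℕ) : (9 : ℤ) ^ n = (3 ^ n) ^ 2 := by
    rw [← pow_mul, mul_comm, pow_mul]
    norm_num
  have hlinear : 9 ^ κ * a + b + c = 0 :=
    (mul_eq_zero.mp (show (3 : ℤ) ^ (l + α + κ) * _ = 0 by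
      rw [nine_pow]; linear_combination h.linear)).resolve_left (by positivity)
  have hcubic : a ^ 3 + b ^ 3 + 9 ^ l * c ^ 3 = 0 :=
    (mul_eq_zero.mp (show (3 : ℤ) ^ (l + 3 * α + 3 * κ) * _ = 0 by
      rw [nine_pow]; linear_combination h.cubic)).resolve_left (by positivity)
  obtain ⟨a', b', c', ha', h'⟩ :=
    exists_isReducedZero_of_coprime_part (right_ne_zero_of_mul ha) hlinear hcubic
  exact ⟨κ, a', b', c', rfl, ha', h'⟩

lemma eq_zero_and_eq_zero_of_linear_of_cubic {R : Type*} [CommRing R] [IsDomain R] {u v x y : R}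
    (hu : u ≠ 0) (hv : v ≠ 0) (huv : u ^ 2 ≠ v ^ 2) (hlinear : u * x + v * y = 0)
    (hcubic : u * x ^ 3 + v * y ^ 3 = 0) : x = 0 ∧ y = 0 := by
  have hx : x = 0 := by
    have hprod : (u * (u ^ 2 - v ^ 2)) * x ^ 3 = 0 := by
      linear_combination (u ^ 2 * x ^ 2 - u * x * v * y + v ^ 2 * y ^ 2) * hlinear - v ^ 2 * hcubic
    exact pow_eq_zero_iff three_ne_zero |>.mp
      ((mul_eq_zero.mp hprod).resolve_left (mul_ne_zero hu (sub_ne_zero.mpr huv)))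
  subst hx
  exact ⟨rfl, (mul_eq_zero.mp (by linear_combination hlinear)).resolve_left hv⟩

lemma three_pow_sq_injective {R : Type*} [CommRing R] [CharZero R] :
    Function.Injective fun i : ℕ => ((3 : R) ^ i) ^ 2 := by
  intro i j hij
  have hnat : 3 ^ (i * 2) = 3 ^ (j * 2) := by
    simp only [← pow_mul] at hij
    exact_mod_cast hij
  exact Nat.mul_right_cancel two_pos (Nat.pow_right_injective (by norm_num : 2 ≤ 3) hnat)

lemma IsDiagonalZero.ne_zero {R : Type*} [CommRing R] [IsDomain R] [CharZero R] {m l : ℕ}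
    {a b c : R} (hl : 0 < l) (hlm : l < m) (h0 : ¬ (a = 0 ∧ b = 0 ∧ c = 0))
    (h : IsDiagonalZero (3 ^ m) (3 ^ l) a b c) : a ≠ 0 ∧ b ≠ 0 ∧ c ≠ 0 := by
  have hpow (i : ℕ) : (3 : R) ^ i ≠ 0 := pow_ne_zero i (by norm_num)
  have key {i j : ℕ} {x y : R} (hij : i ≠ j) (hlinear : 3 ^ i * x + 3 ^ j * y = 0)
      (hcubic : 3 ^ i * x ^ 3 + 3 ^ j * y ^ 3 = 0) : x = 0 ∧ y = 0 :=
    eq_zero_and_eq_zero_of_linear_of_cubic (hpow i) (hpow j) (three_pow_sq_injective.ne hij)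
      hlinear hcubic
  obtain ⟨hlinear, hcubic⟩ := h
  refine ⟨?_, ?_, ?_⟩ <;> rintro rfl
  · obtain ⟨hb, hc⟩ : b = 0 ∧ c = 0 := key (i := l) (j := 0) hl.ne'
      (by linear_combination hlinear) (by linear_combination hcubic)
    exact h0 ⟨rfl, hb, hc⟩
  · obtain ⟨ha, hc⟩ : a = 0 ∧ c = 0 := key (i := m) (j := 0) (by omega)
      (by linear_combination hlinear) (by linear_combination hcubic)
    exact h0 ⟨ha, rfl, hc⟩
  · obtain ⟨ha, hb⟩ : a = 0 ∧ b = 0 := key (i := m) (j := l) hlm.ne'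
      (by linear_combination hlinear) (by linear_combination hcubic)
    exact h0 ⟨ha, hb, rfl⟩

theorem exists_bound_of_int_zero : ∃ B : ℕ, ∀ m l : ℕ, 0 < l → l < m → ∀ a b c : ℤ,
    ¬ (a = 0 ∧ b = 0 ∧ c = 0) → IsDiagonalZero (3 ^ m) (3 ^ l) a b c → m ≤ B := by
  obtain ⟨B, hB⟩ := IsReducedZero.exists_bound
  refine ⟨3 * B, fun m l hl hlm a b c h0 h => ?_⟩
  obtain ⟨ha, hb, hc⟩ := h.ne_zero hl hlm h0
  obtain ⟨κ, a', b', c', rfl, ha', h'⟩ := h.exists_isReducedZero hl.ne' hlm ha hb hc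
  have hle := hB κ l (by omega) hl.ne' a' b' c' ha' h'
  omega

lemma exists_le_mul_sq_of_coprime {P Q d z : ℕ} (hd : 0 < d) (hPQ : P.Coprime Q)
    (h : P * Q = d * z ^ 2) : ∃ d₁ ≤ d, ∃ z₁ : ℕ, P = d₁ * z₁ ^ 2 := by
  obtain ⟨P', d', hcop, hP, hd'⟩ := Nat.exists_coprime P d
  set g := P.gcd d
  have hg : 0 < g := Nat.gcd_pos_of_pos_right P hd
  have hcancel : P' * Q = d' * z ^ 2 := by
    refine Nat.eq_of_mul_eq_mul_left hg ?_
    calc g * (P' * Q) = P * Q := by rw [hP]; ring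
      _ = g * (d' * z ^ 2) := by rw [h, hd']; ring
  obtain ⟨Q', rfl⟩ : d' ∣ Q := hcop.symm.dvd_of_dvd_mul_left ⟨z ^ 2, hcancel⟩
  have hd'pos : 0 < d' := pos_of_mul_pos_left (hd' ▸ hd) hg.le
  have hsq : P' * Q' = z ^ 2 := Nat.eq_of_mul_eq_mul_left hd'pos (by rw [← hcancel]; ring)
  have hP'Q' : IsUnit (gcd P' Q') := Nat.isUnit_iff.mpr
    (hPQ.of_dvd (hP ▸ dvd_mul_right P' g) (dvd_mul_left Q' d'))
  obtain ⟨z₁, hz₁⟩ := exists_eq_pow_of_mul_eq_pow hP'Q' hsq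
  exact ⟨g, Nat.gcd_le_right P hd, z₁, by rw [← hz₁, mul_comm]; exact hP⟩

lemma exists_le_mul_sq_of_isCoprime {P Q : ℤ} {d z : ℕ} (hP : 0 < P) (hQ : 0 < Q) (hd : 0 < d)
    (hPQ : IsCoprime P Q) (h : P * Q = d * z ^ 2) : ∃ d₁ ≤ d, ∃ z₁ : ℕ, P = d₁ * z₁ ^ 2 := by
  lift P to ℕ using hP.le
  lift Q to ℕ using hQ.le
  exact_mod_cast exists_le_mul_sq_of_coprime hd (Nat.isCoprime_iff_coprime.mp hPQ)
    (by exact_mod_cast h)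

lemma exists_forall_le_of_monotone {p : ℕ → ℕ → Prop} (h : ∀ d, ∃ B, p d B)
    (hp : ∀ d B B', B ≤ B' → p d B → p d B') (D : ℕ) : ∃ B, ∀ d ≤ D, p d B := by
  choose f hf using h
  exact ⟨(Finset.range (D + 1)).sup f, fun d hd =>
    hp d _ _ (Finset.le_sup (Finset.mem_range.mpr (Nat.lt_succ_of_le hd))) (hf d)⟩

/-- The nonsquare part of the discriminant of `ratioCubic X Y`, up to the factor `-3`. -/
def discrFactor {R : Type*} [CommRing R] (X Y : R) : R :=
  (X + Y + 1) * (X + Y - 1) * ((X - Y + 1) * (X - Y - 1))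

section discrFactor

variable {m l : ℕ}

lemma three_mul_three_pow_le (hlm : l < m) : (3 : ℤ) * 3 ^ l ≤ 3 ^ m := by
  rw [← pow_succ']
  exact pow_le_pow_right₀ (by norm_num) hlm

lemma discrFactor_right_pos (hlm : l < m) :
    (0 : ℤ) < (3 ^ m - 3 ^ l + 1) * (3 ^ m - 3 ^ l - 1) := by
  have hlm3 := three_mul_three_pow_le hlm
  have hl1 : (0 : ℤ) < 3 ^ l := by positivity
  exact mul_pos (by linarith) (by linarith)

lemma discrFactor_left_pos : (0 : ℤ) < (3 ^ m + 3 ^ l + 1) * (3 ^ m + 3 ^ l - 1) := by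
  have hl1 : (0 : ℤ) < 3 ^ l := by positivity
  have hm1 : (0 : ℤ) < 3 ^ m := by positivity
  exact mul_pos (by linarith) (by linarith)

lemma discrFactor_pos (hlm : l < m) : (0 : ℤ) < discrFactor (3 ^ m) (3 ^ l) :=
  mul_pos discrFactor_left_pos (discrFactor_right_pos hlm)

lemma isCoprime_three_pow_add_three_pow_add_unit {w : ℤ} (hw : IsUnit w) (hm : m ≠ 0) (hl : l ≠ 0)
    (k : ℕ) : IsCoprime (3 ^ m + 3 ^ l + w) (2 * 3 ^ k) := by
  have hw_odd : Odd w := by rcases Int.isUnit_iff.mp hw with rfl | rfl <;> decide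
  have hodd : Odd (3 ^ m + 3 ^ l + w) :=
    ((Odd.pow (by decide)).add_odd (Odd.pow (by decide))).add_odd hw_odd
  have hthree : IsCoprime (3 ^ m + 3 ^ l + w) 3 := by
    obtain ⟨e, he⟩ : (3 : ℤ) ∣ 3 ^ m + 3 ^ l := dvd_add (dvd_pow_self 3 hm) (dvd_pow_self 3 hl)
    rw [he, add_comm]
    exact (isCoprime_one_left.of_isCoprime_of_dvd_left hw.dvd).add_mul_left_left e
  exact (Int.isCoprime_two_right.mpr hodd).mul_right hthree.pow_right

lemma isCoprime_left_factor {w : ℤ} (hw : IsUnit w) (hm : m ≠ 0) (hl : l ≠ 0) :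
    IsCoprime (3 ^ m + 3 ^ l + w) ((3 ^ m - 3 ^ l + w) * (3 ^ m - 3 ^ l - w)) := by
  have hcop := isCoprime_three_pow_add_three_pow_add_unit hw hm hl
  refine IsCoprime.mul_right ?_ ?_
  · rw [show (3 : ℤ) ^ m - 3 ^ l + w = -(2 * 3 ^ l) + (3 ^ m + 3 ^ l + w) * 1 by ring]
    exact (hcop l).neg_right.add_mul_left_right 1
  · rw [show (3 : ℤ) ^ m - 3 ^ l - w = 2 * 3 ^ m + (3 ^ m + 3 ^ l + w) * -1 by ring]
    exact (hcop m).add_mul_left_right (-1)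

lemma exists_square_classes_of_discrFactor_eq {d z : ℕ} (hl : l ≠ 0) (hlm : l < m) (hd : 0 < d)
    (h : discrFactor (3 ^ m) (3 ^ l) = (d * z ^ 2 : ℤ)) :
    (∃ d₁ ≤ d, ∃ z₁ : ℕ, 3 ^ m + (3 ^ l + 1) = d₁ * z₁ ^ 2) ∧
      ∃ d₂ ≤ d, ∃ z₂ : ℕ, (3 ^ m + 3 ^ l) ^ 2 = d₂ * z₂ ^ 2 + 1 := by
  have hm : m ≠ 0 := by omega
  have hl1 : (0 : ℤ) < 3 ^ l := by positivity
  have hm1 : (0 : ℤ) < 3 ^ m := by positivity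
  have hright := discrFactor_right_pos hlm
  have hcop_plus := isCoprime_left_factor isUnit_one hm hl
  have hcop_minus :
      IsCoprime ((3 : ℤ) ^ m + 3 ^ l - 1) ((3 ^ m - 3 ^ l + 1) * (3 ^ m - 3 ^ l - 1)) := by
    have := isCoprime_left_factor (isUnit_one.neg : IsUnit (-1 : ℤ)) hm hl
    rwa [← sub_eq_add_neg, ← sub_eq_add_neg, sub_neg_eq_add, mul_comm] at this
  have hcop_left : IsCoprime ((3 : ℤ) ^ m + 3 ^ l + 1) (3 ^ m + 3 ^ l - 1) := by
    rw [show (3 : ℤ) ^ m + 3 ^ l - 1 = -(2 * 3 ^ 0) + (3 ^ m + 3 ^ l + 1) * 1 by ring]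
    exact (isCoprime_three_pow_add_three_pow_add_unit isUnit_one hm hl 0).neg_right
      |>.add_mul_left_right 1
  constructor
  · obtain ⟨d₁, hd₁, z₁, hz₁⟩ := exists_le_mul_sq_of_isCoprime (by linarith)
      (mul_pos (by linarith) hright) hd (hcop_left.mul_right hcop_plus)
      (by rw [← mul_assoc]; exact h)
    exact ⟨d₁, hd₁, z₁, by zify; linear_combination hz₁⟩
  · obtain ⟨d₂, hd₂, z₂, hz₂⟩ := exists_le_mul_sq_of_isCoprime discrFactor_left_pos hright hd
      (hcop_plus.mul_left hcop_minus) h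
    exact ⟨d₂, hd₂, z₂, by zify; linear_combination hz₂⟩

end discrFactor

lemma isSquareNearMiss_of_twenty_mul_le {d m l z : ℕ} (hlm : 20 * (l + 1) ≤ m)
    (h : 3 ^ m + (3 ^ l + 1) = d * z ^ 2) : IsSquareNearMiss d m (3 ^ l + 1) z := by
  refine ⟨by positivity, h, ?_⟩
  calc (3 ^ l + 1) ^ 20 ≤ (3 ^ (l + 1)) ^ 20 := by
        gcongr
        have := Nat.one_le_pow l 3 three_pos
        omega
    _ = 3 ^ (20 * (l + 1)) := (pow_mul' 3 _ _).symm
    _ ≤ 3 ^ m := Nat.pow_le_pow_right three_pos hlm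

theorem exists_bound_of_discrFactor_eq (D : ℕ) : ∃ B : ℕ, ∀ m l d z : ℕ, 0 < l → l < m → 0 < d →
    d ≤ D → discrFactor (3 ^ m) (3 ^ l) = (d * z ^ 2 : ℤ) → m ≤ B := by
  obtain ⟨M, hM⟩ := exists_forall_le_of_monotone IsSquareNearMiss.exists_bound
    (fun d B B' hB h m k z hnear => (h m k z hnear).trans hB) D
  obtain ⟨C, hC⟩ := exists_forall_le_of_monotone exists_bound_of_pell
    (fun d B B' hB h m l z hlm heq => (h m l z hlm heq).imp_left (·.trans hB)) D
  refine ⟨20 * (C + 1) + 312 + M, fun m l d z hl hlm hd hdD h => ?_⟩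
  obtain ⟨⟨d₁, hd₁, z₁, hz₁⟩, d₂, hd₂, z₂, hz₂⟩ :=
    exists_square_classes_of_discrFactor_eq hl.ne' hlm hd h
  by_contra! hlt
  have hlm20 : 20 * (l + 1) ≤ m := by
    have := hC d₂ (hd₂.trans hdD) m l z₂ hlm.le hz₂
    omega
  have := hM d₁ (hd₁.trans hdD) m (3 ^ l + 1) z₁ (isSquareNearMiss_of_twenty_mul_le hlm20 hz₁)
  omega

section AlgebraicClosure

universe u

open MvPolynomial

lemma linearIndependent_adjoin_of_algebraicIndependent {k K M ι : Type*} [CommRing k] [CommRing K]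
    [CommRing M] [Algebra k K] [Algebra K M] [Algebra k M] [IsScalarTower k K M] {t : Set M}
    (ht : AlgebraicIndependent K ((↑) : t → M)) {v : ι → K} (hv : LinearIndependent k v) :
    LinearIndependent (Algebra.adjoin k t) fun i => algebraMap K M (v i) := by
  refine linearIndependent_iff'.mpr fun s g hg i hi => ?_
  have hpoly (x : Algebra.adjoin k t) : ∃ p : MvPolynomial t k, aeval ((↑) : t → M) p = x :=
    (Algebra.adjoin_eq_range k t ▸ x.2 : (x : M) ∈ (aeval ((↑) : t → M)).range)
  choose p hp using fun j => hpoly (g j)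
  have hsum : ∑ j ∈ s, C (v j) * (p j).map (algebraMap k K) = 0 := by
    refine ht.eq_zero_of_aeval_eq_zero _ ?_
    rw [map_sum, ← hg]
    refine Finset.sum_congr rfl fun j _ => ?_
    rw [map_mul, aeval_C, aeval_map_algebraMap, hp, mul_comm, Algebra.smul_def]
    rfl
  have hcoeff (e : t →₀ ℕ) : ∑ j ∈ s, (p j).coeff e • v j = 0 := by
    simpa [coeff_sum, coeff_C_mul, coeff_map, Algebra.smul_def, mul_comm] using
      congrArg (coeff e) hsum
  have hpi : p i = 0 := by
    ext e
    exact linearIndependent_iff'.mp hv s _ (hcoeff e) i hi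
  exact Subtype.ext (by rw [← hp i, hpi, map_zero, ZeroMemClass.coe_zero])

open scoped IntermediateField.algebraAdjoinAdjoin in
-- A basis of the algebraic closure of `k` in `M` stays linearly independent over the purely
-- transcendental field `k(t)` generated by a transcendence basis `t`, over which `M` is finite.
lemma finiteDimensional_algebraicClosure (k M : Type*) [Field k] [Field M] [Algebra k M]
    [Algebra.EssFiniteType k M] : FiniteDimensional k (algebraicClosure k M) := by
  obtain ⟨t, ht⟩ := exists_isTranscendenceBasis k M
  have : Algebra.IsAlgebraic (IntermediateField.adjoin k t) M := by
    convert! ht.isAlgebraic_field <;> simp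
  have : Algebra.EssFiniteType (IntermediateField.adjoin k t) M := .of_comp k _ M
  have : Module.Finite (IntermediateField.adjoin k t) M :=
    Algebra.finite_of_essFiniteType_of_isAlgebraic
  let b := Module.Basis.ofVectorSpace k (algebraicClosure k M)
  have hli : LinearIndependent (IntermediateField.adjoin k t)
      fun i => algebraMap (algebraicClosure k M) M (b i) :=
    (LinearIndependent.iff_fractionRing (Algebra.adjoin k t) _).mp
      (linearIndependent_adjoin_of_algebraicIndependent ht.1.algebraicClosure b.linearIndependent)
  have := hli.finite
  exact Module.Finite.of_basis b

lemma exists_galois_algHom_algebraicClosure (k : Type*) (M : Type u) [Field k] [PerfectField k]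
    [Field M] [Algebra k M] [Algebra.EssFiniteType k M] :
    ∃ (N : Type u) (_ : Field N) (_ : Algebra k N) (_ : FiniteDimensional k N) (_ : IsGalois k N),
      Nonempty (algebraicClosure k M →ₐ[k] N) := by
  let K := algebraicClosure k M
  have : FiniteDimensional k K := finiteDimensional_algebraicClosure k M
  let N := IntermediateField.normalClosure k K (AlgebraicClosure K)
  have : Normal k N := normalClosure.normal k K (AlgebraicClosure K)
  exact ⟨N, inferInstance, inferInstance, normalClosure.is_finiteDimensional k K _, ⟨⟩,
    ⟨IsScalarTower.toAlgHom k K N⟩⟩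

end AlgebraicClosure

lemma isSquare_mul_of_forall_fixed_iff {k N : Type*} [Field k] [Field N] [Algebra k N]
    [FiniteDimensional k N] [IsGalois k N] {a b : k} {s t : N} (hs : algebraMap k N a = s * s)
    (ht : algebraMap k N b = t * t) (hst : ∀ σ : N ≃ₐ[k] N, σ s = s ↔ σ t = t) :
    IsSquare (a * b) := by
  have hsign {c : k} {u : N} (hu : algebraMap k N c = u * u) (σ : N ≃ₐ[k] N) :
      σ u = u ∨ σ u = -u := by
    rw [← mul_self_eq_mul_self_iff, ← map_mul, ← hu, AlgEquiv.commutes]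
  have hfixed (σ : N ≃ₐ[k] N) : σ (s * t) = s * t := by
    rw [map_mul]
    by_cases hσ : σ s = s
    · rw [hσ, (hst σ).mp hσ]
    · rw [(hsign hs σ).resolve_left hσ, (hsign ht σ).resolve_left (mt (hst σ).mpr hσ), neg_mul_neg]
  obtain ⟨r, hr⟩ := (IsGalois.mem_range_algebraMap_iff_fixed (F := k) (s * t)).mpr hfixed
  refine ⟨r, (algebraMap k N).injective ?_⟩
  rw [map_mul, map_mul, hs, ht, hr]
  ring

lemma eq_of_squarefree_of_isSquare_mul {a b : ℕ} (ha : Squarefree a) (hb : Squarefree b)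
    (hab : IsSquare (a * b)) : a = b := by
  have hdvd {a b : ℕ} (ha : Squarefree a) (hab : IsSquare (a * b)) : a ∣ b := by
    obtain ⟨c, hc⟩ := hab
    obtain ⟨e, rfl⟩ : a ∣ c :=
      (ha.dvd_pow_iff_dvd two_ne_zero).mp ⟨b, by rw [sq, hc]⟩
    exact ⟨e * e, Nat.eq_of_mul_eq_mul_left (Nat.pos_of_ne_zero ha.ne_zero)
      (by rw [hc]; ring)⟩
  exact Nat.dvd_antisymm (hdvd ha hab) (hdvd hb (mul_comm a b ▸ hab))

-- `ℚ(√(q d))` is determined by its fixing subgroup, and there are finitely many subgroups.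
lemma finite_squarefree_isSquare_algebraMap {q : ℚ} (hq : q ≠ 0) (N : Type*) [Field N] [Algebra ℚ N]
    [FiniteDimensional ℚ N] [IsGalois ℚ N] :
    {d : ℕ | Squarefree d ∧ IsSquare (algebraMap ℚ N (q * d))}.Finite := by
  choose s hs using fun d : {d : ℕ | Squarefree d ∧ IsSquare (algebraMap ℚ N (q * d))} => d.2.2
  refine Set.finite_coe_iff.mp (Finite.of_injective (fun d => {σ : N ≃ₐ[ℚ] N | σ (s d) = s d}) ?_)
  intro d d' hdd'
  have hsq : IsSquare (((d * d' : ℕ) : ℚ)) := by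
    obtain ⟨r, hr⟩ := isSquare_mul_of_forall_fixed_iff (hs d) (hs d') (Set.ext_iff.mp hdd')
    refine ⟨r / q, ?_⟩
    field_simp
    push_cast
    linear_combination hr
  exact Subtype.ext (eq_of_squarefree_of_isSquare_mul d.2.1 d'.2.1
    (Rat.isSquare_natCast_iff.mp hsq))

namespace IsDiagonalZero

variable {R S : Type*} [CommRing R] [CommRing S] {X Y a b c : R}

lemma map (f : R →+* S) (h : IsDiagonalZero X Y a b c) :
    IsDiagonalZero (f X) (f Y) (f a) (f b) (f c) :=
  ⟨by simpa using congrArg f h.linear, by simpa using congrArg f h.cubic⟩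

lemma of_map {f : R →+* S} (hf : Function.Injective f)
    (h : IsDiagonalZero (f X) (f Y) (f a) (f b) (f c)) : IsDiagonalZero X Y a b c :=
  ⟨hf (by simpa using h.linear), hf (by simpa using h.cubic)⟩

lemma map_three_pow {m l : ℕ} (f : R →+* S) (h : IsDiagonalZero (3 ^ m) (3 ^ l) a b c) :
    IsDiagonalZero (3 ^ m) (3 ^ l) (f a) (f b) (f c) := by
  simpa only [map_pow, map_ofNat] using h.map f

lemma of_map_three_pow {m l : ℕ} {f : R →+* S} (hf : Function.Injective f)
    (h : IsDiagonalZero (3 ^ m) (3 ^ l) (f a) (f b) (f c)) :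
    IsDiagonalZero (3 ^ m) (3 ^ l) a b c :=
  .of_map hf (by simpa only [map_pow, map_ofNat] using h)

lemma mul_left (u : R) (h : IsDiagonalZero X Y a b c) :
    IsDiagonalZero X Y (u * a) (u * b) (u * c) :=
  ⟨by linear_combination u * h.linear, by linear_combination u ^ 3 * h.cubic⟩

lemma div_right {k : Type*} [Field k] {X Y a b c : k} (hb : b ≠ 0) (h : IsDiagonalZero X Y a b c) :
    IsDiagonalZero X Y (a / b) 1 (c / b) := by
  simpa [div_eq_inv_mul, hb] using h.mul_left b⁻¹

end IsDiagonalZero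

/-- The cubic `X t³ + Y - (X t + Y)³` whose roots are the ratios `a / b` of the coordinates of the
zeros `(a, b, c)` of the diagonal forms with weights `X`, `Y` and `1`. -/
def ratioCubic {R : Type*} [CommRing R] (X Y : R) : Cubic R :=
  ⟨X - X ^ 3, -3 * X ^ 2 * Y, -3 * X * Y ^ 2, Y - Y ^ 3⟩

section ratioCubic

lemma discr_ratioCubic {R : Type*} [CommRing R] (X Y : R) :
    (ratioCubic X Y).discr = (3 * X * Y) ^ 2 * (-3 * discrFactor X Y) := by
  simp only [ratioCubic, Cubic.discr, discrFactor]
  ring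

lemma aeval_ratioCubic {R A : Type*} [CommRing R] [CommRing A] [Algebra R A] (X Y : R) (t : A) :
    Polynomial.aeval t (ratioCubic X Y).toPoly = algebraMap R A X * t ^ 3 + algebraMap R A Y -
      (algebraMap R A X * t + algebraMap R A Y) ^ 3 := by
  simp only [ratioCubic, Cubic.toPoly, map_add, map_mul, map_pow, map_sub, map_neg, map_ofNat,
    Polynomial.aeval_C, Polynomial.aeval_X]
  ring

lemma IsDiagonalZero.aeval_ratioCubic_eq_zero {R A : Type*} [CommRing R] [CommRing A] [Algebra R A]
    {X Y : R} {t c : A} (h : IsDiagonalZero (algebraMap R A X) (algebraMap R A Y) t 1 c) :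
    Polynomial.aeval t (ratioCubic X Y).toPoly = 0 := by
  rw [aeval_ratioCubic]
  obtain rfl : c = -(algebraMap R A X * t + algebraMap R A Y) := by linear_combination h.linear
  linear_combination h.cubic

lemma isDiagonalZero_of_isRoot_ratioCubic {R : Type*} [CommRing R] {X Y t : R}
    (h : (ratioCubic X Y).toPoly.IsRoot t) : IsDiagonalZero X Y t 1 (-(X * t + Y)) := by
  rw [Polynomial.IsRoot, ← Polynomial.coe_aeval_eq_eval, aeval_ratioCubic] at h
  simp only [Algebra.algebraMap_self, RingHom.id_apply] at h
  exact ⟨by ring, by linear_combination h⟩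

lemma ratioCubic_a_ne_zero {R : Type*} [CommRing R] [IsDomain R] [CharZero R] {m : ℕ} (hm : m ≠ 0)
    (Y : R) : (ratioCubic (3 ^ m) Y).a ≠ 0 := by
  have hsq : ((3 : R) ^ m) ^ 2 ≠ 1 := by
    simpa using (three_pow_sq_injective (R := R)).ne hm
  have hfactor : (ratioCubic (3 ^ m) Y).a = 3 ^ m * (1 - (3 ^ m) ^ 2) := by
    simp only [ratioCubic]
    ring
  exact hfactor ▸ mul_ne_zero (pow_ne_zero m (by norm_num)) (sub_ne_zero.mpr hsq.symm)

end ratioCubic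

-- Without a root in `k` the cubic is irreducible, so it splits in the normal extension `N`.
lemma isSquare_discr_of_aeval_eq_zero {k N : Type*} [Field k] [Field N] [Algebra k N] [Normal k N]
    {P : Cubic k} (ha : P.a ≠ 0) (hroot : ∀ r, ¬ P.toPoly.IsRoot r) {t : N}
    (ht : Polynomial.aeval t P.toPoly = 0) : IsSquare (algebraMap k N P.discr) := by
  have hdeg : P.toPoly.natDegree = 3 := Cubic.natDegree_of_a_ne_zero ha
  have hirr : Irreducible P.toPoly := by
    rw [Polynomial.irreducible_iff_roots_eq_zero_of_degree_le_three (by omega) (by omega),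
      Multiset.eq_zero_iff_forall_notMem]
    exact fun r hr => hroot r (Polynomial.isRoot_of_mem_roots hr)
  have hsplits : (P.toPoly.map (algebraMap k N)).Splits := by
    refine (Normal.splits ‹_› t).of_dvd
      (Polynomial.map_ne_zero (minpoly.ne_zero (Normal.isIntegral ‹_› t))) (Polynomial.map_dvd _ ?_)
    rw [← minpoly.eq_of_irreducible hirr ht]
    exact dvd_mul_right _ _
  obtain ⟨x, y, z, hroots⟩ := (Cubic.splits_iff_roots_eq_three ha).mp hsplits
  exact ⟨_, (Cubic.discr_eq_prod_three_roots ha hroots).trans (sq _)⟩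

lemma exists_bound_of_rat_zero : ∃ B : ℕ, ∀ m l : ℕ, 0 < l → l < m → ∀ t c : ℚ,
    IsDiagonalZero (3 ^ m) (3 ^ l) t 1 c → m ≤ B := by
  obtain ⟨B, hB⟩ := exists_bound_of_int_zero
  refine ⟨B, fun m l hl hlm t c h => ?_⟩
  refine hB m l hl hlm t.num t.den (-(3 ^ m * t.num + 3 ^ l * t.den))
    (fun h0 => t.den_ne_zero (by exact_mod_cast h0.2.1))
    (.of_map (Int.castRingHom ℚ).injective_int ?_)
  have hscaled := h.mul_left (t.den : ℚ)
  rw [mul_one, Rat.den_mul_eq_num] at hscaled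
  have hc : t.den * c = -(3 ^ m * t.num + 3 ^ l * t.den) := by
    linear_combination hscaled.linear
  simpa [hc] using hscaled

lemma discrFactor_eq_mul_sq_of_isSquare {N : Type*} [Field N] [Algebra ℚ N] {m l : ℕ}
    (hlm : l < m) (h : IsSquare (algebraMap ℚ N (-3 * discrFactor (3 ^ m) (3 ^ l)))) :
    ∃ d z : ℕ, Squarefree d ∧ IsSquare (algebraMap ℚ N (-3 * d)) ∧
      discrFactor (3 ^ m) (3 ^ l) = (d * z ^ 2 : ℤ) := by
  have hpos := discrFactor_pos hlm
  obtain ⟨E, hE⟩ := Int.eq_ofNat_of_zero_le hpos.le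
  obtain ⟨d, z, hdz, hd⟩ := Nat.sq_mul_squarefree E
  have hz : z ≠ 0 := by
    rintro rfl
    simp [hE, ← hdz] at hpos
  have hint : discrFactor (3 ^ m) (3 ^ l) = (d * z ^ 2 : ℤ) := by
    rw [hE, ← hdz]
    push_cast
    ring
  have hrat : discrFactor (3 ^ m) (3 ^ l) = (d * z ^ 2 : ℚ) := by
    simpa [discrFactor] using congrArg (Int.cast : ℤ → ℚ) hint
  have hquot : algebraMap ℚ N (-3 * d) =
      algebraMap ℚ N (-3 * discrFactor (3 ^ m) (3 ^ l)) / algebraMap ℚ N z ^ 2 := by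
    rw [← map_pow, ← map_div₀, hrat]
    field_simp
  exact ⟨d, z, hd, hquot ▸ h.div (IsSquare.sq _), hint⟩

lemma exists_bound_of_galois_zero (N : Type*) [Field N] [Algebra ℚ N] [FiniteDimensional ℚ N]
    [IsGalois ℚ N] : ∃ B : ℕ, ∀ m l : ℕ, 0 < l → l < m → ∀ t c : N,
      IsDiagonalZero (3 ^ m) (3 ^ l) t 1 c → m ≤ B := by
  obtain ⟨D, hD⟩ :=
    (finite_squarefree_isSquare_algebraMap (q := -3) (by norm_num) N).bddAbove
  obtain ⟨B₁, hB₁⟩ := exists_bound_of_rat_zero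
  obtain ⟨B₂, hB₂⟩ := exists_bound_of_discrFactor_eq D
  refine ⟨max B₁ B₂, fun m l hl hlm t c h => ?_⟩
  by_cases hroot : ∃ r, (ratioCubic ((3 : ℚ) ^ m) (3 ^ l)).toPoly.IsRoot r
  · obtain ⟨r, hr⟩ := hroot
    exact (hB₁ m l hl hlm r _ (isDiagonalZero_of_isRoot_ratioCubic hr)).trans (le_max_left _ _)
  · have hdiscr : IsSquare (algebraMap ℚ N (ratioCubic (3 ^ m) (3 ^ l)).discr) :=
      isSquare_discr_of_aeval_eq_zero (t := t) (ratioCubic_a_ne_zero (by omega) _)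
        (not_exists.mp hroot) (IsDiagonalZero.aeval_ratioCubic_eq_zero (by simpa using h))
    have hsq : IsSquare (algebraMap ℚ N (-3 * discrFactor (3 ^ m) (3 ^ l))) := by
      rw [discr_ratioCubic, map_mul, map_pow] at hdiscr
      refine (mul_div_cancel_left₀ _ ?_).subst (hdiscr.div (IsSquare.sq _))
      rw [← map_pow, map_ne_zero]
      positivity
    obtain ⟨d, z, hd, hd_sq, hdz⟩ := discrFactor_eq_mul_sq_of_isSquare hlm hsq
    exact (hB₂ m l d z hl hlm (Nat.pos_of_ne_zero hd.ne_zero) (hD ⟨hd, hd_sq⟩) hdz).trans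
      (le_max_right _ _)

lemma IsDiagonalZero.mem_algebraicClosure {M : Type*} [Field M] [Algebra ℚ M] {m l : ℕ}
    (hm : m ≠ 0) {t c : M} (h : IsDiagonalZero (3 ^ m) (3 ^ l) t 1 c) :
    t ∈ algebraicClosure ℚ M :=
  mem_algebraicClosure_iff.mpr ⟨(ratioCubic (3 ^ m) (3 ^ l)).toPoly,
    Cubic.ne_zero_of_a_ne_zero (ratioCubic_a_ne_zero hm _),
    IsDiagonalZero.aeval_ratioCubic_eq_zero (by simpa using h)⟩

theorem exists_bound_of_essFiniteType_zero (M : Type*) [Field M] [Algebra ℚ M]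
    [Algebra.EssFiniteType ℚ M] : ∃ B : ℕ, ∀ m l : ℕ, 0 < l → l < m → ∀ a b c : M,
      ¬ (a = 0 ∧ b = 0 ∧ c = 0) → IsDiagonalZero (3 ^ m) (3 ^ l) a b c → m ≤ B := by
  have : CharZero M := algebraRat.charZero M
  obtain ⟨N, _, _, _, _, ⟨f⟩⟩ := exists_galois_algHom_algebraicClosure ℚ M
  obtain ⟨B, hB⟩ := exists_bound_of_galois_zero N
  refine ⟨B, fun m l hl hlm a b c h0 h => ?_⟩
  have hratio := h.div_right (h.ne_zero hl hlm h0).2.1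
  rw [show c / b = -(3 ^ m * (a / b) + 3 ^ l) by linear_combination hratio.linear] at hratio
  let t : algebraicClosure ℚ M := ⟨a / b, hratio.mem_algebraicClosure (by omega)⟩
  have hzero : IsDiagonalZero (3 ^ m) (3 ^ l) t 1 (-(3 ^ m * t + 3 ^ l)) :=
    .of_map_three_pow (algebraMap (algebraicClosure ℚ M) M).injective hratio
  exact hB m l hl hlm (f t) _ (map_one f ▸ hzero.map_three_pow (f : algebraicClosure ℚ M →+* N))

section LeadingCoefficients

open MvPolynomial

open scoped MonomialOrder

lemma coeff_nsmul_pow_of_degree_le {R I : Type*} [CommRing R] (ord : MonomialOrder I)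
    {p : MvPolynomial I R} {s : I →₀ ℕ} (h : ord.degree p ≼[ord] s) (d : ℕ) :
    coeff (d • s) (p ^ d) = coeff s p ^ d := by
  induction d with
  | zero => simp
  | succ d ih =>
    have hdeg : ord.degree (p ^ d) ≼[ord] d • s :=
      (ord.degree_pow_le d).trans (by simpa only [map_nsmul] using nsmul_le_nsmul_right h d)
    rw [succ_nsmul, pow_succ, ord.coeff_mul_of_add_of_degree_le hdeg h, ih, pow_succ]

lemma exists_coeff_sum_eq_zero_and_sum_pow_eq_zero {R I J : Type*} [CommRing R] [Finite I]
    [Fintype J] {q : J → MvPolynomial I R} {d : ℕ} (hq : q ≠ 0) (hsum : ∑ j, q j = 0)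
    (hpow : ∑ j, q j ^ d = 0) :
    ∃ s : I →₀ ℕ, (∃ j, coeff s (q j) ≠ 0) ∧ ∑ j, coeff s (q j) = 0 ∧
      ∑ j, coeff s (q j) ^ d = 0 := by
  classical
  obtain ⟨_⟩ : Nonempty (LinearOrder I) :=
    ⟨LinearOrder.lift' (Finite.equivFin I) (Equiv.injective _)⟩
  let ord : MonomialOrder I := .lex
  obtain ⟨j₀, hj₀⟩ := Function.ne_iff.mp hq
  obtain ⟨j, hj, hmax⟩ := Finset.exists_max_image {j | q j ≠ 0}
    (fun j => ord.toSyn (ord.degree (q j))) ⟨j₀, by simpa using hj₀⟩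
  have hle : ∀ i, ord.degree (q i) ≼[ord] ord.degree (q j) := fun i => by
    by_cases hi : q i = 0
    · simp [hi]
    · exact hmax i (by simpa using hi)
  refine ⟨ord.degree (q j), ⟨j, ord.leadingCoeff_ne_zero_iff.mpr (by simpa using hj)⟩, ?_, ?_⟩
  · rw [← coeff_sum, hsum, coeff_zero]
  · simp only [← coeff_nsmul_pow_of_degree_le ord (hle _), ← coeff_sum, hpow, coeff_zero]

end LeadingCoefficients

section LinearSubstitution

open MvPolynomial

variable {R I : Type*} [CommRing R]

lemma coeff_bind₁_C_mul_X (u : I → R) (p : MvPolynomial I R) (s : I →₀ ℕ) :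
    coeff s (bind₁ (fun i => C (u i) * X i) p) = (s.prod fun i e => u i ^ e) * coeff s p := by
  classical
  induction p using MvPolynomial.induction_on' with
  | monomial t r =>
    have hprod : bind₁ (fun i => C (u i) * X i) (monomial t r) =
        C (t.prod fun i e => u i ^ e) * monomial t r := by
      rw [bind₁_monomial, monomial_eq]
      simp only [mul_pow, Finsupp.prod, Finset.prod_mul_distrib, map_prod, map_pow]
      ring
    rw [hprod, coeff_C_mul, coeff_monomial]
    split_ifs with hts
    · rw [hts]
    · simp only [mul_zero]
  | add p q hp hq => rw [map_add, coeff_add, hp, hq, coeff_add, mul_add]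

variable [Fintype I]

lemma bind₁_toMvPolynomial_injective [DecidableEq I] {A : Matrix I I R} (hA : IsUnit A) :
    Function.Injective (bind₁ A.toMvPolynomial) := by
  obtain ⟨B, hB⟩ := hA.exists_right_inv
  refine Function.LeftInverse.injective (g := bind₁ B.toMvPolynomial) fun p => ?_
  rw [bind₁_bind₁]
  simp only [← Matrix.toMvPolynomial_mul, hB, Matrix.toMvPolynomial_one, bind₁_X_left,
    AlgHom.id_apply]

lemma bind₁_toMvPolynomial_rename {A : Matrix I I R} {σ : I → I} {u : I → R}
    (h : ∀ i j, A (σ i) j = u j * A i j) (p : MvPolynomial I R) :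
    bind₁ A.toMvPolynomial (rename σ p) =
      bind₁ (fun j => C (u j) * X j) (bind₁ A.toMvPolynomial p) := by
  rw [bind₁_rename, bind₁_bind₁]
  congr 2
  funext i
  simp only [Function.comp_apply, Matrix.toMvPolynomial, h, map_sum, ← C_mul_X_eq_monomial,
    map_mul, bind₁_C_right, bind₁_X_right]
  exact Finset.sum_congr rfl fun j _ => by ring

end LinearSubstitution

section CharacterMatrix

variable {K : Type*} [Field K] {d : ℕ} [NeZero d]

/-- The character table of `(ℤ/d)ⁿ`, whose entries are the values of the characters
`g ↦ ψ (e ⬝ g)`; as a change of variables it diagonalizes the translations of `(ℤ/d)ⁿ`. -/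
def characterMatrix (ψ : AddChar (ZMod d) K) (n : ℕ) :
    Matrix (Fin n → ZMod d) (Fin n → ZMod d) K :=
  Matrix.of fun g e => ψ (e ⬝ᵥ g)

variable {ψ : AddChar (ZMod d) K}

lemma sum_addChar_dotProduct (hψ : ψ.IsPrimitive) {n : ℕ} (g : Fin n → ZMod d) :
    ∑ e : Fin n → ZMod d, ψ (e ⬝ᵥ g) = if g = 0 then (d : K) ^ n else 0 := by
  split_ifs with hg
  · simp [hg, ZMod.card]
  · obtain ⟨i, hi⟩ := Function.ne_iff.mp hg
    let χ : AddChar (Fin n → ZMod d) K :=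
      { toFun := fun e => ψ (e ⬝ᵥ g)
        map_zero_eq_one' := by simp
        map_add_eq_mul' := fun e e' => by rw [add_dotProduct, AddChar.map_add_eq_mul] }
    have hχ : χ ≠ 1 := fun h => hψ hi <| by
      ext x
      simpa [χ, mul_comm] using DFunLike.congr_fun h (Pi.single i x)
    exact AddChar.sum_eq_zero_of_ne_one hχ

lemma characterMatrix_mul_transpose_inv (hψ : ψ.IsPrimitive) (n : ℕ) :
    characterMatrix ψ n * (characterMatrix ψ⁻¹ n).transpose = (d : K) ^ n • 1 := by
  ext g g'
  have hentry : ∀ e : Fin n → ZMod d, ψ (e ⬝ᵥ g) * ψ⁻¹ (e ⬝ᵥ g') = ψ (e ⬝ᵥ (g - g')) :=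
    fun e => by rw [dotProduct_sub, AddChar.map_sub_eq_div, AddChar.inv_apply', div_eq_mul_inv]
  simp only [characterMatrix, Matrix.mul_apply, Matrix.transpose_apply, Matrix.of_apply, hentry,
    sum_addChar_dotProduct hψ, Matrix.smul_apply, Matrix.one_apply, sub_eq_zero, smul_eq_mul,
    mul_ite, mul_one, mul_zero]

lemma isUnit_blockDiagonal'_characterMatrix [CharZero K] (hψ : ψ.IsPrimitive) {ι : Type*}
    [Fintype ι] [DecidableEq ι] (k : ι → ℕ) :
    IsUnit (Matrix.blockDiagonal' fun o => characterMatrix ψ (k o)) := by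
  have hd : ∀ o, (d : K) ^ k o ≠ 0 := fun o => pow_ne_zero _ (Nat.cast_ne_zero.mpr (NeZero.ne d))
  refine .of_mul_eq_one (Matrix.blockDiagonal' fun o =>
    ((d : K) ^ k o)⁻¹ • (characterMatrix ψ⁻¹ (k o)).transpose) ?_
  simp only [← Matrix.blockDiagonal'_mul, Matrix.mul_smul, characterMatrix_mul_transpose_inv hψ,
    inv_smul_smul₀ (hd _)]
  exact Matrix.blockDiagonal'_one

end CharacterMatrix

section Translation

variable {ι : Type*} {V : ι → Type*} [∀ o, AddGroup (V o)]

/-- The permutation of a disjoint union of groups which translates the `o`-th one by `h o`. -/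
def sigmaTranslation (h : ∀ o, V o) : Equiv.Perm (Σ o, V o) :=
  Equiv.sigmaCongrRight fun o => Equiv.addRight (h o)

@[simp]
lemma sigmaTranslation_mk (h : ∀ o, V o) (o : ι) (g : V o) :
    sigmaTranslation h ⟨o, g⟩ = ⟨o, g + h o⟩ := rfl

-- If the character is nontrivial on `V o`, then `a` vanishes off `V o`, and all the `d`-th powers
-- of its values on `V o` are equal, hence zero.
lemma apply_mk_eq_of_sigmaTranslation {K : Type*} [Field K] [CharZero K] [Fintype ι]
    [∀ o, Fintype (V o)] {d : ℕ} (hd : d ≠ 0) {a : (Σ o, V o) → K} {χ : (∀ o, V o) → K}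
    (hχ : ∀ h, χ h ^ d = 1) (ha : ∀ h i, a (sigmaTranslation h i) = χ h * a i)
    (hsum : ∑ i, a i ^ d = 0) (o : ι) (g : V o) : a ⟨o, g⟩ = a ⟨o, 0⟩ := by
  classical
  have hsingle : ∀ g, a ⟨o, g⟩ = χ (Pi.single o g) * a ⟨o, 0⟩ := fun g => by
    simpa using ha (Pi.single o g) ⟨o, 0⟩
  by_cases hone : χ (Pi.single o g) = 1
  · rw [hsingle, hone, one_mul]
  have hoff : ∀ o' ≠ o, ∀ g', a ⟨o', g'⟩ = 0 := fun o' ho' g' => by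
    have hfix := ha (Pi.single o g) ⟨o', g'⟩
    rw [sigmaTranslation_mk, Pi.single_eq_of_ne ho', add_zero] at hfix
    exact by_contra fun hne => hone ((mul_eq_right₀ hne).mp hfix.symm)
  have hpow : ∀ g, a ⟨o, g⟩ ^ d = a ⟨o, 0⟩ ^ d := fun g => by
    rw [hsingle, mul_pow, hχ, one_mul]
  have hzero : a ⟨o, 0⟩ = 0 := by
    rw [Fintype.sum_sigma, Fintype.sum_eq_single o fun o' ho' =>
      Finset.sum_eq_zero fun g' _ => by rw [hoff o' ho', zero_pow hd]] at hsum
    simpa [hpow, hd] using hsum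
  rw [hsingle, hzero, mul_zero]

end Translation

section Equivariant

open MvPolynomial

variable {K : Type*} [Field K] {d : ℕ} {ι : Type*}

/-- The character of the translation group by which it acts on the monomial `s` in the variables
diagonalized by `characterMatrix`. -/
def monomialCharacter (ψ : AddChar (ZMod d) K) {k : ι → ℕ}
    (s : (Σ o, Fin (k o) → ZMod d) →₀ ℕ) (h : ∀ o, Fin (k o) → ZMod d) : K :=
  s.prod fun i e => ψ (i.2 ⬝ᵥ h i.1) ^ e

lemma monomialCharacter_pow_eq_one (ψ : AddChar (ZMod d) K) {k : ι → ℕ}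
    (s : (Σ o, Fin (k o) → ZMod d) →₀ ℕ) (h : ∀ o, Fin (k o) → ZMod d) :
    monomialCharacter ψ s h ^ d = 1 := by
  have hψ : ∀ x, ψ x ^ d = 1 := fun x => by
    rw [← AddChar.map_nsmul_eq_pow, nsmul_eq_mul, ZMod.natCast_self, zero_mul,
      AddChar.map_zero_eq_one]
  simp only [monomialCharacter, Finsupp.prod, ← Finset.prod_pow, pow_right_comm _ _ d, hψ, one_pow,
    Finset.prod_const_one]

lemma coeff_bind₁_characterMatrix_rename [NeZero d] [Fintype ι] [DecidableEq ι]
    (ψ : AddChar (ZMod d) K) {k : ι → ℕ}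
    (h : ∀ o, Fin (k o) → ZMod d) (p : MvPolynomial (Σ o, Fin (k o) → ZMod d) K)
    (s : (Σ o, Fin (k o) → ZMod d) →₀ ℕ) :
    let A := Matrix.blockDiagonal' fun o => characterMatrix ψ (k o)
    coeff s (bind₁ A.toMvPolynomial (rename (sigmaTranslation h) p)) =
      monomialCharacter ψ s h * coeff s (bind₁ A.toMvPolynomial p) := by
  intro A
  rw [bind₁_toMvPolynomial_rename (u := fun j => ψ (j.2 ⬝ᵥ h j.1)), coeff_bind₁_C_mul_X]
  · rfl
  rintro ⟨o, g⟩ ⟨o', e⟩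
  by_cases ho : o = o'
  · subst ho
    simp [A, characterMatrix, Matrix.blockDiagonal'_apply_eq, dotProduct_add,
      AddChar.map_add_eq_mul, mul_comm]
  · simp [A, Matrix.blockDiagonal'_apply_ne _ _ _ ho]

theorem exists_diagonal_zero_of_equivariant [CharZero K] [NeZero d] [Fintype ι]
    {ψ : AddChar (ZMod d) K} (hψ : ψ.IsPrimitive)
    {k : ι → ℕ} {f : (Σ o, Fin (k o) → ZMod d) → MvPolynomial (Σ o, Fin (k o) → ZMod d) K}
    (hf : ∀ (σ : Equiv.Perm (Σ o, Fin (k o) → ZMod d)) i, rename σ (f i) = f (σ i)) (h0 : f ≠ 0)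
    (hsum : ∑ i, f i = 0) (hpow : ∑ i, f i ^ d = 0) :
    ∃ a : ι → K, a ≠ 0 ∧ ∑ o, (d : K) ^ k o * a o = 0 ∧ ∑ o, (d : K) ^ k o * a o ^ d = 0 := by
  classical
  let Φ := bind₁ (Matrix.blockDiagonal' fun o => characterMatrix ψ (k o)).toMvPolynomial
  have hΦ : Function.Injective Φ :=
    bind₁_toMvPolynomial_injective (isUnit_blockDiagonal'_characterMatrix hψ k)
  have hΦf : (fun i => Φ (f i)) ≠ 0 := by
    obtain ⟨i, hi⟩ := Function.ne_iff.mp h0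
    exact Function.ne_iff.mpr ⟨i, (map_ne_zero_iff Φ hΦ).mpr hi⟩
  obtain ⟨s, ⟨j, hj⟩, hsum, hpow⟩ := exists_coeff_sum_eq_zero_and_sum_pow_eq_zero (d := d) hΦf
    (by rw [← map_sum, hsum, map_zero]) (by simp only [← map_pow, ← map_sum, hpow, map_zero])
  have hconst : ∀ o g, coeff s (Φ (f ⟨o, g⟩)) = coeff s (Φ (f ⟨o, 0⟩)) :=
    apply_mk_eq_of_sigmaTranslation (a := fun i => coeff s (Φ (f i))) (NeZero.ne d)
      (monomialCharacter_pow_eq_one ψ s)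
      (fun h i => by rw [← hf, coeff_bind₁_characterMatrix_rename]) hpow
  refine ⟨fun o => coeff s (Φ (f ⟨o, 0⟩)), Function.ne_iff.mpr ⟨j.1, ?_⟩, ?_, ?_⟩
  · exact hconst j.1 j.2 ▸ hj
  · simpa [Fintype.sum_sigma, hconst, ZMod.card] using hsum
  · simpa [Fintype.sum_sigma, hconst, ZMod.card] using hpow

end Equivariant

section PermutedVariables

open MvPolynomial

variable {R I : Type*} [CommRing R]

lemma exists_equivariant_family (b : I) {f : MvPolynomial I R}
    (hf : ∀ σ : Equiv.Perm I, σ b = b → rename σ f = f) :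
    ∃ g : I → MvPolynomial I R, g b = f ∧ ∀ (σ : Equiv.Perm I) i, rename σ (g i) = g (σ i) := by
  classical
  refine ⟨fun i => rename (Equiv.swap b i) f, by simp, fun σ i => ?_⟩
  have hstab := hf (Equiv.swap b (σ i) * σ * Equiv.swap b i) (by simp)
  calc rename σ (rename (Equiv.swap b i) f)
      = rename (Equiv.swap b (σ i)) (rename (Equiv.swap b (σ i) * σ * Equiv.swap b i) f) := by
        rw [rename_rename, rename_rename]
        congr 2
        funext j
        simp
    _ = rename (Equiv.swap b (σ i)) f := by rw [hstab]

lemma sum_eq_zero_of_sum_perm_apply_eq_zero {M : Type*} [AddCommGroup M] [IsAddTorsionFree M]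
    [Fintype I] [DecidableEq I] {b : I} {g : I → M} (h : ∑ σ : Equiv.Perm I, g (σ b) = 0) :
    ∑ i, g i = 0 := by
  have htransitive : ∀ i, ∑ σ : Equiv.Perm I, g (σ i) = 0 := fun i => by
    rw [← h]
    exact Fintype.sum_equiv (Equiv.mulRight (Equiv.swap b i)) _ _ fun σ => by simp
  have hcard : Fintype.card (Equiv.Perm I) • ∑ i, g i = 0 := by
    calc Fintype.card (Equiv.Perm I) • ∑ i, g i = ∑ σ : Equiv.Perm I, ∑ i, g (σ i) := by
          simp [Equiv.sum_comp]
      _ = 0 := by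
          rw [Finset.sum_comm]
          exact Finset.sum_eq_zero fun i _ => htransitive i
  exact (smul_eq_zero.mp hcard).resolve_left Fintype.card_ne_zero

lemma exists_equivariant_map_rename {K J : Type*} [CommRing K] [Fintype I] [Fintype J] {φ : R →+* K}
    (hφ : Function.Injective φ) (e : I ≃ J) {d : ℕ} {g : I → MvPolynomial I R}
    (hg : ∀ (σ : Equiv.Perm I) i, rename σ (g i) = g (σ i)) (h0 : g ≠ 0)
    (hsum : ∑ i, g i = 0) (hpow : ∑ i, g i ^ d = 0) :
    ∃ f : J → MvPolynomial J K, (∀ (σ : Equiv.Perm J) j, rename σ (f j) = f (σ j)) ∧ f ≠ 0 ∧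
      ∑ j, f j = 0 ∧ ∑ j, f j ^ d = 0 := by
  let Φ : MvPolynomial I R →+* MvPolynomial J K := (rename e).toRingHom.comp (map φ)
  have hΦ : Function.Injective Φ := (rename_injective e e.injective).comp (map_injective φ hφ)
  have hrename : ∀ (σ : Equiv.Perm J) p, rename σ (Φ p) = Φ (rename (e.permCongr.symm σ) p) :=
    fun σ p => by
      simp only [Φ, RingHom.comp_apply, AlgHom.toRingHom_eq_coe, RingHom.coe_coe, map_rename,
        rename_rename]
      congr 2
      funext i
      simp
  refine ⟨fun j => Φ (g (e.symm j)), fun σ j => ?_, ?_, ?_, ?_⟩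
  · rw [hrename, hg]
    simp
  · obtain ⟨i, hi⟩ := Function.ne_iff.mp h0
    refine Function.ne_iff.mpr ⟨e i, ?_⟩
    rw [e.symm_apply_apply]
    exact (map_ne_zero_iff Φ hΦ).mpr hi
  · rw [← map_sum, e.symm.sum_comp, hsum, map_zero]
  · simp only [← map_pow]
    rw [← map_sum, e.symm.sum_comp fun i => g i ^ d, hpow, map_zero]

end PermutedVariables

section GeneralExtension

open MvPolynomial

variable (F₀ : Type) [Field F₀] (n : ℕ)

lemma permAut_algebraMap (σ : Equiv.Perm (Fin n)) (p : MvPolynomial (Fin n) F₀) :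
    permAut F₀ n σ (algebraMap _ (L F₀ n) p) = algebraMap _ (L F₀ n) (rename σ p) := by
  rw [permAut, IsFractionRing.ringEquivOfRingEquiv_algebraMap]
  rfl

lemma permAut_one : permAut F₀ n 1 = RingEquiv.refl (L F₀ n) := by
  refine RingEquiv.toRingHom_injective
    (IsFractionRing.ringHom_ext (A := MvPolynomial (Fin n) F₀) fun p => ?_)
  simp [permAut_algebraMap]

lemma permAut_mul (σ τ : Equiv.Perm (Fin n)) :
    permAut F₀ n (σ * τ) = (permAut F₀ n τ).trans (permAut F₀ n σ) := by
  refine RingEquiv.toRingHom_injective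
    (IsFractionRing.ringHom_ext (A := MvPolynomial (Fin n) F₀) fun p => ?_)
  simp [permAut_algebraMap, rename_rename]

instance : MulSemiringAction (Equiv.Perm (Fin n)) (L F₀ n) where
  smul σ x := permAut F₀ n σ x
  one_smul x := congrArg (· x) (permAut_one F₀ n)
  mul_smul σ τ x := congrArg (· x) (permAut_mul F₀ n σ τ)
  smul_zero σ := map_zero (permAut F₀ n σ)
  smul_add σ := map_add (permAut F₀ n σ)
  smul_one σ := map_one (permAut F₀ n σ)
  smul_mul σ := map_mul (permAut F₀ n σ)

variable {F₀ n}

lemma perm_smul_algebraMap (σ : Equiv.Perm (Fin n)) (p : MvPolynomial (Fin n) F₀) :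
    σ • algebraMap _ (L F₀ n) p = algebraMap _ (L F₀ n) (rename σ p) :=
  permAut_algebraMap F₀ n σ p

lemma perm_smul_coe_eq [NeZero n] (δ : E F₀ n) {σ : Equiv.Perm (Fin n)} (hσ : σ 0 = 0) :
    σ • (δ : L F₀ n) = δ :=
  δ.2 σ fun i hi => (Fin.ext hi : i = 0) ▸ hσ

instance : IsGaloisGroup (Equiv.Perm (Fin n)) (F F₀ n) (L F₀ n) where
  faithful := ⟨fun {σ τ} hστ => by
    ext i
    have hX := hστ (algebraMap _ (L F₀ n) (X i : MvPolynomial (Fin n) F₀))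
    rw [perm_smul_algebraMap, perm_smul_algebraMap, rename_X, rename_X] at hX
    rw [X_injective (IsFractionRing.injective (MvPolynomial (Fin n) F₀) (L F₀ n) hX)]⟩
  commutes := ⟨fun σ a x => by
    rw [Algebra.smul_def, Algebra.smul_def, smul_mul']
    exact congrArg (· * σ • x) (a.2 σ (Set.mem_univ σ))⟩
  isInvariant := ⟨fun x hx => ⟨⟨x, fun σ _ => hx σ⟩, rfl⟩⟩

instance : IsScalarTower (F F₀ n) (E F₀ n) (L F₀ n) := .of_algebraMap_eq fun _ => rfl

lemma sum_perm_smul_eq_zero_of_trace_eq_zero {δ : E F₀ n}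
    (h : Algebra.trace (F F₀ n) (E F₀ n) δ = 0) :
    ∑ σ : Equiv.Perm (Fin n), σ • (δ : L F₀ n) = 0 := by
  have : IsGalois (F F₀ n) (L F₀ n) := IsGaloisGroup.isGalois (Equiv.Perm (Fin n)) _ _
  have : FiniteDimensional (F F₀ n) (L F₀ n) :=
    IsGaloisGroup.finiteDimensional (Equiv.Perm (Fin n)) _ _
  have : FiniteDimensional (F F₀ n) (E F₀ n) := .left _ _ (L F₀ n)
  have : FiniteDimensional (E F₀ n) (L F₀ n) := .right (F F₀ n) _ _
  have htrace : Algebra.trace (F F₀ n) (L F₀ n) (algebraMap (E F₀ n) (L F₀ n) δ) = 0 := by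
    rw [← Algebra.trace_trace (S := E F₀ n), Algebra.trace_algebraMap, map_nsmul, h, smul_zero]
  calc ∑ σ : Equiv.Perm (Fin n), σ • (δ : L F₀ n) = ∑ σ : Gal(L F₀ n/F F₀ n), σ (δ : L F₀ n) :=
        Fintype.sum_equiv (IsGaloisGroup.mulEquivAlgEquiv _ (F F₀ n) (L F₀ n)).toEquiv _ _
          fun σ => rfl
    _ = algebraMap (F F₀ n) (L F₀ n) (Algebra.trace _ _ (algebraMap (E F₀ n) (L F₀ n) δ)) :=
        (trace_eq_sum_automorphisms _).symm
    _ = 0 := by rw [htrace, map_zero]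

lemma exists_symmetric_mul_eq_algebraMap (x : L F₀ n) : ∃ Q f : MvPolynomial (Fin n) F₀, Q ≠ 0 ∧
    (∀ σ : Equiv.Perm (Fin n), rename σ Q = Q) ∧
      algebraMap _ (L F₀ n) f = algebraMap _ (L F₀ n) Q * x := by
  obtain ⟨p, q, hq, rfl⟩ := IsFractionRing.div_surjective (MvPolynomial (Fin n) F₀) x
  have hq0 : q ≠ 0 := nonZeroDivisors.ne_zero hq
  let Q : MvPolynomial (Fin n) F₀ := ∏ σ : Equiv.Perm (Fin n), rename σ q
  obtain ⟨r, hr⟩ : q ∣ Q := by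
    simpa using Finset.dvd_prod_of_mem (fun σ : Equiv.Perm (Fin n) => rename σ q)
      (Finset.mem_univ 1)
  refine ⟨Q, p * r, Finset.prod_ne_zero_iff.mpr fun σ _ => ?_, fun τ => ?_, ?_⟩
  · exact (map_ne_zero_iff _ (rename_injective σ σ.injective)).mpr hq0
  · simp only [Q, map_prod, rename_rename]
    exact Fintype.prod_equiv (Equiv.mulLeft τ) _ _ fun σ => rfl
  · have hqL : algebraMap _ (L F₀ n) q ≠ 0 := by simpa using hq0
    rw [hr, map_mul, map_mul]
    field_simp

theorem exists_equivariant_family_of_trace_eq_zero [CharZero F₀] [NeZero n] {d : ℕ} {δ : E F₀ n}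
    (h0 : δ ≠ 0) (h1 : Algebra.trace (F F₀ n) (E F₀ n) δ = 0)
    (hd : Algebra.trace (F F₀ n) (E F₀ n) (δ ^ d) = 0) :
    ∃ g : Fin n → MvPolynomial (Fin n) F₀,
      (∀ (σ : Equiv.Perm (Fin n)) i, rename σ (g i) = g (σ i)) ∧ g ≠ 0 ∧
        ∑ i, g i = 0 ∧ ∑ i, g i ^ d = 0 := by
  have hinj := IsFractionRing.injective (MvPolynomial (Fin n) F₀) (L F₀ n)
  obtain ⟨Q, f, hQ0, hQ, hf⟩ := exists_symmetric_mul_eq_algebraMap (δ : L F₀ n)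
  have hconj : ∀ σ : Equiv.Perm (Fin n),
      algebraMap _ (L F₀ n) (rename σ f) = algebraMap _ (L F₀ n) Q * σ • (δ : L F₀ n) := by
    intro σ
    rw [← perm_smul_algebraMap, hf, smul_mul', perm_smul_algebraMap, hQ]
  obtain ⟨g, hgf, hg⟩ := exists_equivariant_family 0 (f := f) fun σ hσ => hinj <| by
    rw [hconj, hf, perm_smul_coe_eq δ hσ]
  have hg0 : ∀ σ : Equiv.Perm (Fin n), g (σ 0) = rename σ f := fun σ => by rw [← hg, hgf]
  refine ⟨g, hg, fun hzero => ?_, ?_, ?_⟩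
  · have hfL : algebraMap _ (L F₀ n) f ≠ 0 := by
      rw [hf]
      exact mul_ne_zero ((map_ne_zero_iff _ hinj).mpr hQ0) (by simpa using h0)
    exact hfL (by rw [← hgf, hzero, Pi.zero_apply, map_zero])
  · refine sum_eq_zero_of_sum_perm_apply_eq_zero (b := 0) (hinj ?_)
    simp only [hg0, map_sum, hconj, ← Finset.mul_sum, sum_perm_smul_eq_zero_of_trace_eq_zero h1,
      mul_zero, map_zero]
  · refine sum_eq_zero_of_sum_perm_apply_eq_zero (b := 0) (g := fun i => g i ^ d) (hinj ?_)
    have hsum := sum_perm_smul_eq_zero_of_trace_eq_zero hd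
    simp only [SubmonoidClass.coe_pow, smul_pow'] at hsum
    simp only [hg0, map_sum, map_pow, hconj, mul_pow, ← Finset.mul_sum, hsum, mul_zero, map_zero]

theorem exists_diagonal_zero_of_trace_eq_zero [CharZero F₀] [NeZero n] {K ι : Type*} [Field K]
    [Algebra F₀ K] [Fintype ι] {d : ℕ} [NeZero d] {ω : K} (hω : IsPrimitiveRoot ω d) {k : ι → ℕ}
    (hn : n = ∑ o, d ^ k o) {δ : E F₀ n} (h0 : δ ≠ 0)
    (h1 : Algebra.trace (F F₀ n) (E F₀ n) δ = 0)
    (hd : Algebra.trace (F F₀ n) (E F₀ n) (δ ^ d) = 0) :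
    ∃ a : ι → K, a ≠ 0 ∧ ∑ o, (d : K) ^ k o * a o = 0 ∧ ∑ o, (d : K) ^ k o * a o ^ d = 0 := by
  have : CharZero K := charZero_of_injective_algebraMap (algebraMap F₀ K).injective
  have hcard : Fintype.card (Fin n) = Fintype.card (Σ o, Fin (k o) → ZMod d) := by
    simp [hn, ZMod.card]
  obtain ⟨g, hg, hg0, hg1, hgd⟩ := exists_equivariant_family_of_trace_eq_zero h0 h1 hd
  obtain ⟨f, hf, hf0, hf1, hfd⟩ := exists_equivariant_map_rename (algebraMap F₀ K).injective
    (Fintype.equivOfCardEq hcard) hg hg0 hg1 hgd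
  exact exists_diagonal_zero_of_equivariant (AddChar.zmodChar_primitive_of_primitive_root d hω)
    hf hf0 hf1 hfd

end GeneralExtension

lemma exists_isDiagonalZero_of_trace_eq_zero {F₀ K : Type} [Field F₀] [CharZero F₀] [Field K]
    [Algebra F₀ K] {ω : K} (hω : IsPrimitiveRoot ω 3) {m l j n : ℕ}
    (hn : n = 3 ^ (j + m) + 3 ^ (j + l) + 3 ^ j) {δ : E F₀ n} (h0 : δ ≠ 0)
    (h1 : Algebra.trace (F F₀ n) (E F₀ n) δ = 0)
    (h3 : Algebra.trace (F F₀ n) (E F₀ n) (δ ^ 3) = 0) :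
    ∃ a b c : K, ¬ (a = 0 ∧ b = 0 ∧ c = 0) ∧ IsDiagonalZero (3 ^ m) (3 ^ l) a b c := by
  have : CharZero K := charZero_of_injective_algebraMap (algebraMap F₀ K).injective
  have : NeZero n := ⟨by rw [hn]; positivity⟩
  obtain ⟨a, ha, hsum, hcubes⟩ := exists_diagonal_zero_of_trace_eq_zero hω
    (k := ![j + m, j + l, j]) (by simpa [Fin.sum_univ_three] using hn) h0 h1 h3
  have hj : (3 : K) ^ j ≠ 0 := pow_ne_zero j (by norm_num)
  simp only [Fin.sum_univ_three, Matrix.cons_val, Nat.cast_ofNat, pow_add] at hsum hcubes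
  refine ⟨a 0, a 1, a 2, fun ⟨h₀, h₁, h₂⟩ => ha ?_, ⟨mul_left_cancel₀ hj ?_,
    mul_left_cancel₀ hj ?_⟩⟩
  · ext o
    fin_cases o <;> assumption
  · linear_combination hsum
  · linear_combination hcubes

theorem exists_bound_of_trace_eq_zero (F₀ : Type) [Field F₀] [CharZero F₀]
    [Algebra.EssFiniteType ℚ F₀] : ∃ B : ℕ, ∀ m l j n : ℕ, 0 < l → l < m →
      n = 3 ^ (j + m) + 3 ^ (j + l) + 3 ^ j → ∀ δ : E F₀ n, δ ≠ 0 →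
        Algebra.trace (F F₀ n) (E F₀ n) δ = 0 → Algebra.trace (F F₀ n) (E F₀ n) (δ ^ 3) = 0 →
          m ≤ B := by
  have : FiniteDimensional F₀ (CyclotomicField 3 F₀) :=
    IsCyclotomicExtension.finiteDimensional {3} F₀ _
  have : Algebra.EssFiniteType ℚ (CyclotomicField 3 F₀) := .comp ℚ F₀ _
  obtain ⟨B, hB⟩ := exists_bound_of_essFiniteType_zero (CyclotomicField 3 F₀)
  refine ⟨B, fun m l j n hl hlm hn δ h0 h1 h3 => ?_⟩
  obtain ⟨a, b, c, habc, hzero⟩ := exists_isDiagonalZero_of_trace_eq_zero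
    (IsCyclotomicExtension.zeta_spec 3 F₀ (CyclotomicField 3 F₀)) hn h0 h1 h3
  exact hB m l hl hlm a b c habc hzero

end GenExtBase

/-- **Theorem 2.3 (Theorem `thm:precise 2` of the paper, weak form):** let `F₀` be a finitely
generated field of characteristic `0`. There is a finite subset `𝒮` of `ℕ × ℕ` depending only
on `F₀` such that for every `n = 3^k₁ + 3^k₂ + 3^k₃` with `k₁ > k₂ > k₃ ≥ 0` and
`(k₁ - k₃, k₂ - k₃) ∉ 𝒮`, the general field extension `Eₙ/Fₙ` of degree `n` over `F₀`
contains no nonzero `δ` with `Tr_{Eₙ/Fₙ}(δ) = Tr_{Eₙ/Fₙ}(δ³) = 0`. -/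
theorem no_traceZero_cube_traceZero_in_general_extension_over_base
    (F₀ : Type) [Field F₀] [CharZero F₀]
    (hfg : ∃ S : Finset F₀, IntermediateField.adjoin ℚ (S : Set F₀) = ⊤) :
    ∃ 𝒮 : Finset (ℕ × ℕ),
      ∀ k₁ k₂ k₃ : ℕ, k₁ > k₂ → k₂ > k₃ → (k₁ - k₃, k₂ - k₃) ∉ 𝒮 →
        ∀ n : ℕ, n = 3 ^ k₁ + 3 ^ k₂ + 3 ^ k₃ →
          ¬ ∃ δ : GenExtBase.E F₀ n, δ ≠ 0 ∧
            Algebra.trace (GenExtBase.F F₀ n) (GenExtBase.E F₀ n) δ = 0 ∧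
            Algebra.trace (GenExtBase.F F₀ n) (GenExtBase.E F₀ n) (δ ^ 3) = 0 := by
  have : Algebra.EssFiniteType ℚ F₀ := IntermediateField.fg_top_iff.mp hfg
  obtain ⟨B, hB⟩ := GenExtBase.exists_bound_of_trace_eq_zero F₀
  refine ⟨Finset.Iic (B, B), ?_⟩
  rintro k₁ k₂ k₃ h₁₂ h₂₃ hk n hn ⟨δ, h0, h1, h3⟩
  have hle : k₁ - k₃ ≤ B :=
    hB (k₁ - k₃) (k₂ - k₃) k₃ n (by omega) (by omega)
      (by rwa [Nat.add_sub_of_le (by omega), Nat.add_sub_of_le (by omega)]) δ h0 h1 h3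
  exact hk (Finset.mem_Iic.mpr (Prod.mk_le_mk.mpr ⟨hle, by omega⟩))

end
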